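/- arXiv:1512.07518 — 2 statements merged into one kernel-verified Lean document; each statement's English description precedes it below -/
import Mathlib

section
/- Sampling lemma: let p ∈ [1, ∞), Q ∈ ℕ, and suppose every diagonal entry of R is ≥ h where h ≥ 2Q^{d+1}. Then for every m ∈ {1,…,Q}^d and every finitely supported f : ℤ^d → ℂ, setting g(x) = ∫_{[0,1)^d} e^{−2πi ξ·x} η(Rξ) f̂(ξ) dξ (x ∈ ℤ^d), one has (1/2) Q^{−d/p} ‖g‖_{ℓ^p(ℤ^d)} ≤ ( Σ_{x∈ℤ^d} |g(Qx + m)|^p )^{1/p} ≤ 2 Q^{−d/p} ‖g‖_{ℓ^p(ℤ^d)}; in particular the two quantities are comparable with constants independent of Q, h, m and f. -/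
open scoped ENNReal

noncomputable section

/-- Discrete Fourier transform of a finitely supported `f : ℤ^d → ℂ`. -/
def discFourier (d : ℕ) (f : (Fin d → ℤ) → ℂ) (ξ : EuclideanSpace ℝ (Fin d)) : ℂ :=
  ∑' y : Fin d → ℤ, f y * Complex.exp (2 * Real.pi * Complex.I * (∑ i, ξ i * (y i : ℝ)))

/-- `g = ℱ^{−1}(η(R·) f̂)`, the band-limited piece of `f`. -/
def bandPiece (d : ℕ) (η : EuclideanSpace ℝ (Fin d) → ℝ) (R : Fin d → ℝ)
    (f : (Fin d → ℤ) → ℂ) (x : Fin d → ℤ) : ℂ :=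
  ∫ ξ in {ξ : EuclideanSpace ℝ (Fin d) | ∀ i, ξ i ∈ Set.Ico (0 : ℝ) 1},
    Complex.exp (-(2 * Real.pi * Complex.I) * (∑ i, ξ i * (x i : ℝ))) *
      ((η (WithLp.toLp 2 fun i => R i * ξ i) : ℝ) : ℂ) * discFourier d f ξ

open MeasureTheory Filter Topology
open scoped NNReal

/-- The `ℓ^p` quantity. -/
def lpN {ι : Type*} (p : ℝ) (g : ι → ℂ) : ℝ≥0∞ := (∑' x, (‖g x‖ₑ) ^ p) ^ (1 / p)

theorem lpN_add {ι : Type*} {p : ℝ} (hp : 1 ≤ p) (g h : ι → ℂ) :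
    lpN p (fun x => g x + h x) ≤ lpN p g + lpN p h := by
  let _ : MeasurableSpace ι := ⊤
  have := ENNReal.lintegral_Lp_add_le (μ := Measure.count) (p := p)
    (f := fun x => ‖g x‖ₑ) (g := fun x => ‖h x‖ₑ) measurable_from_top.aemeasurable
    measurable_from_top.aemeasurable hp
  simp only [lintegral_count] at this
  refine le_trans ?_ this
  unfold lpN
  have hp' : 0 ≤ 1 / p := by positivity
  refine ENNReal.rpow_le_rpow (ENNReal.tsum_le_tsum fun x => ?_) hp'
  exact ENNReal.rpow_le_rpow (enorm_add_le _ _) (by linarith)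

theorem lpN_mono {ι : Type*} {p : ℝ} (hp : 1 ≤ p) {g h : ι → ℂ} (H : ∀ x, ‖g x‖ ≤ ‖h x‖) :
    lpN p g ≤ lpN p h := by
  unfold lpN
  have hp' : 0 ≤ 1 / p := by positivity
  refine ENNReal.rpow_le_rpow (ENNReal.tsum_le_tsum fun x => ?_) hp'
  exact ENNReal.rpow_le_rpow (enorm_le_iff_norm_le.2 (H x)) (by linarith)

theorem lpN_smul {ι : Type*} {p : ℝ} (hp : 1 ≤ p) (c : ℂ) (g : ι → ℂ) :
    lpN p (fun x => c * g x) = ‖c‖ₑ * lpN p g := by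
  unfold lpN
  have h0 : p ≠ 0 := by linarith
  have hp' : 0 ≤ 1 / p := by positivity
  simp only [enorm_mul]
  simp_rw [ENNReal.mul_rpow_of_nonneg _ _ (by linarith : (0:ℝ) ≤ p)]
  rw [ENNReal.tsum_mul_left, ENNReal.mul_rpow_of_nonneg _ _ hp', ← ENNReal.rpow_mul,
    mul_one_div_cancel h0, ENNReal.rpow_one]

theorem lpN_comp_inj {ι κ : Type*} {p : ℝ} (hp : 1 ≤ p) (g : ι → ℂ) {s : κ → ι}
    (hs : Function.Injective s) : lpN p (fun x => g (s x)) ≤ lpN p g := by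
  unfold lpN
  have hp' : 0 ≤ 1 / p := by positivity
  exact ENNReal.rpow_le_rpow
    (ENNReal.tsum_comp_le_tsum_of_injective hs (fun x => ‖g x‖ₑ ^ p)) hp'

theorem lpN_lim {ι : Type*} {p : ℝ} (hp : 1 ≤ p) (G : ℕ → ι → ℂ) (g : ι → ℂ) (B : ℝ≥0∞)
    (hG : ∀ n, lpN p (G n) ≤ B) (hl : ∀ x, Tendsto (fun n => G n x) atTop (𝓝 (g x))) :
    lpN p g ≤ B := by
  have h0 : 0 < p := by linarith
  unfold lpN at *
  simp only [one_div, ENNReal.rpow_inv_le_iff h0] at hG ⊢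
  rw [ENNReal.tsum_eq_iSup_sum]
  refine iSup_le fun s => ?_
  refine le_of_tendsto (f := fun n => ∑ x ∈ s, ‖G n x‖ₑ ^ p) (x := atTop) ?_
    (Eventually.of_forall fun n => (ENNReal.sum_le_tsum s).trans (hG n))
  refine tendsto_finsetSum _ fun x _ => ?_
  exact (ENNReal.continuous_rpow_const.tendsto _).comp ((hl x).enorm)

theorem hasSum_cv {α : Type*} [AddCommMonoid α] [TopologicalSpace α] {f g : ℕ → α} {a b : α}
    (h : HasSum f a) (hfg : ∀ n, g n = f n) (hab : b = a) : HasSum g b := by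
  rw [hab, funext hfg]; exact h

section mult
variable {d : ℕ} {Ω : Type*} [MeasurableSpace Ω]

/-- The character. -/
def chr (k : Fin d → ℤ) (ξ : Fin d → ℝ) : ℂ :=
  Complex.exp (((-(2 * Real.pi * ∑ i, ξ i * (k i : ℝ)) : ℝ) : ℂ) * Complex.I)

theorem norm_chr (k : Fin d → ℤ) (ξ : Fin d → ℝ) : ‖chr k ξ‖ = 1 := by
  unfold chr; rw [Complex.norm_exp_ofReal_mul_I]

theorem chr_add (k l : Fin d → ℤ) (ξ : Fin d → ℝ) :
    chr (fun i => k i + l i) ξ = chr k ξ * chr l ξ := by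
  unfold chr
  rw [← Complex.exp_add, ← add_mul, ← Complex.ofReal_add]
  congr 4
  push_cast
  simp only [mul_add, Finset.sum_add_distrib]
  ring

theorem chr_add_right (k : Fin d → ℤ) (ξ ζ : Fin d → ℝ) :
    chr k (fun i => ξ i + ζ i) = chr k ξ * chr k ζ := by
  unfold chr
  rw [← Complex.exp_add, ← add_mul, ← Complex.ofReal_add]
  congr 4
  simp only [add_mul, Finset.sum_add_distrib]
  ring

theorem measurable_chr (k : Fin d → ℤ) {Ξ : Ω → Fin d → ℝ} (hΞ : Measurable Ξ) :
    Measurable fun ω => chr k (Ξ ω) := by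
  unfold chr
  have : ∀ i, Measurable fun ω => Ξ ω i := fun i => (measurable_pi_apply i).comp hΞ
  fun_prop

/-- transform -/
def trf (ν : Measure Ω) (Ξ : Ω → Fin d → ℝ) (F : Ω → ℂ) (x : Fin d → ℤ) : ℂ :=
  ∫ ω, chr x (Ξ ω) * F ω ∂ν

/-- multiplier predicate -/
def IsM (p : ℝ) (ν : Measure Ω) (Ξ : Ω → Fin d → ℝ) (a : Ω → ℂ) (B : ℝ≥0) : Prop :=
  Measurable a ∧ (∀ ω, ‖a ω‖ ≤ B) ∧ ∀ F, Integrable F ν →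
    lpN p (trf ν Ξ (fun ω => a ω * F ω)) ≤ B * lpN p (trf ν Ξ F)

variable {p : ℝ} {ν : Measure Ω} {Ξ : Ω → Fin d → ℝ}

theorem IsM.integrable {a : Ω → ℂ} {B : ℝ≥0} (h : IsM p ν Ξ a B) {F : Ω → ℂ}
    (hF : Integrable F ν) : Integrable (fun ω => a ω * F ω) ν :=
  hF.bdd_mul h.1.aestronglyMeasurable (Eventually.of_forall h.2.1)

theorem integrable_chr (hΞ : Measurable Ξ) (x : Fin d → ℤ) {F : Ω → ℂ}
    (hF : Integrable F ν) : Integrable (fun ω => chr x (Ξ ω) * F ω) ν :=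
  hF.bdd_mul (c := 1) (measurable_chr x hΞ).aestronglyMeasurable
    (Eventually.of_forall fun _ => (norm_chr _ _).le)

theorem isM_const (hp : 1 ≤ p) (c : ℂ) : IsM p ν Ξ (fun _ => c) ‖c‖₊ := by
  refine ⟨measurable_const, fun _ => le_rfl, fun F hF => ?_⟩
  have : trf ν Ξ (fun ω => c * F ω) = fun x => c * trf ν Ξ F x := by
    funext x
    unfold trf
    rw [← integral_const_mul]
    congr 1; funext ω; ring
  rw [this, lpN_smul hp]
  rfl

theorem isM_chr (hp : 1 ≤ p) (hΞ : Measurable Ξ) (k : Fin d → ℤ) :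
    IsM p ν Ξ (fun ω => chr k (Ξ ω)) 1 := by
  refine ⟨measurable_chr k hΞ, fun _ => (norm_chr _ _).le, fun F hF => ?_⟩
  have : trf ν Ξ (fun ω => chr k (Ξ ω) * F ω) = fun x => trf ν Ξ F (x + k) := by
    funext x
    unfold trf
    congr 1; funext ω
    rw [← mul_assoc, ← chr_add]; rfl
  rw [this, ENNReal.coe_one, one_mul]
  exact lpN_comp_inj hp (trf ν Ξ F) (add_left_injective k)

theorem IsM.add (hp : 1 ≤ p) (hΞ : Measurable Ξ) {a b : Ω → ℂ} {A B : ℝ≥0} (ha : IsM p ν Ξ a A)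
    (hb : IsM p ν Ξ b B) : IsM p ν Ξ (fun ω => a ω + b ω) (A + B) := by
  refine ⟨ha.1.add hb.1, fun ω => ?_, fun F hF => ?_⟩
  · exact (norm_add_le _ _).trans (add_le_add (ha.2.1 ω) (hb.2.1 ω))
  · have : trf ν Ξ (fun ω => (a ω + b ω) * F ω) =
        fun x => trf ν Ξ (fun ω => a ω * F ω) x + trf ν Ξ (fun ω => b ω * F ω) x := by
      funext x
      unfold trf
      rw [← integral_add (integrable_chr hΞ x (ha.integrable hF))
        (integrable_chr hΞ x (hb.integrable hF))]
      congr 1; funext ω; ring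
    rw [this]
    refine (lpN_add hp _ _).trans ?_
    rw [ENNReal.coe_add, add_mul]
    exact add_le_add (ha.2.2 F hF) (hb.2.2 F hF)

theorem IsM.mul {a b : Ω → ℂ} {A B : ℝ≥0} (ha : IsM p ν Ξ a A)
    (hb : IsM p ν Ξ b B) : IsM p ν Ξ (fun ω => a ω * b ω) (A * B) := by
  refine ⟨ha.1.mul hb.1, fun ω => ?_, fun F hF => ?_⟩
  · rw [norm_mul]
    push_cast
    exact mul_le_mul (ha.2.1 ω) (hb.2.1 ω) (norm_nonneg _) A.2
  · simp only [mul_assoc]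
    refine (ha.2.2 _ (hb.integrable hF)).trans ?_
    rw [ENNReal.coe_mul, mul_assoc]
    gcongr
    exact hb.2.2 F hF

theorem IsM.mono {a : Ω → ℂ} {A B : ℝ≥0} (ha : IsM p ν Ξ a A) (h : A ≤ B) : IsM p ν Ξ a B := by
  refine ⟨ha.1, fun ω => (ha.2.1 ω).trans (by exact_mod_cast h), fun F hF => ?_⟩
  refine (ha.2.2 F hF).trans ?_
  gcongr

theorem IsM.sum (hp : 1 ≤ p) (hΞ : Measurable Ξ) {ι : Type*} (s : Finset ι) {a : ι → Ω → ℂ}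
    {B : ι → ℝ≥0} (ha : ∀ n, IsM p ν Ξ (a n) (B n)) :
    IsM p ν Ξ (fun ω => ∑ n ∈ s, a n ω) (∑ n ∈ s, B n) := by
  classical
  induction s using Finset.induction_on with
  | empty => simpa using isM_const (ν := ν) (Ξ := Ξ) hp 0
  | insert n s hn ih =>
    simp only [Finset.sum_insert hn]
    exact (ha n).add hp hΞ ih

theorem IsM.pow (hp : 1 ≤ p) {a : Ω → ℂ} {A : ℝ≥0} (ha : IsM p ν Ξ a A) (n : ℕ) :
    IsM p ν Ξ (fun ω => a ω ^ n) (A ^ n) := by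
  induction n with
  | zero => simpa using isM_const (ν := ν) (Ξ := Ξ) hp 1
  | succ n ih => simp only [pow_succ]; exact ih.mul ha

theorem IsM.hasSum (hp : 1 ≤ p) (hΞ : Measurable Ξ) {a : ℕ → Ω → ℂ} {B : ℕ → ℝ≥0}
    (ha : ∀ n, IsM p ν Ξ (a n) (B n)) {S : ℝ≥0} (hB : HasSum B S) {A : Ω → ℂ}
    (hA : ∀ ω, HasSum (fun n => a n ω) (A ω)) : IsM p ν Ξ A S := by
  have hpart : ∀ n, IsM p ν Ξ (fun ω => ∑ i ∈ Finset.range n, a i ω) S := fun n =>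
    (IsM.sum hp hΞ (Finset.range n) ha).mono (sum_le_hasSum _ (fun _ _ => zero_le) hB)
  have hlim : ∀ ω, Tendsto (fun n => ∑ i ∈ Finset.range n, a i ω) atTop (𝓝 (A ω)) :=
    fun ω => (hA ω).tendsto_sum_nat
  refine ⟨?_, fun ω => ?_, fun F hF => ?_⟩
  · exact measurable_of_tendsto_metrizable (fun n => (hpart n).1) (tendsto_pi_nhds.2 hlim)
  · exact le_of_tendsto (hlim ω).norm (Eventually.of_forall fun n => (hpart n).2.1 ω)
  · refine lpN_lim hp (fun n => trf ν Ξ (fun ω => (∑ i ∈ Finset.range n, a i ω) * F ω)) _ _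
      (fun n => (hpart n).2.2 F hF) fun x => ?_
    refine tendsto_integral_of_dominated_convergence (fun ω => S * ‖F ω‖) (fun n => ?_)
      (hF.norm.const_mul _) (fun n => Eventually.of_forall fun ω => ?_)
      (Eventually.of_forall fun ω => ?_)
    · exact (integrable_chr hΞ x ((hpart n).integrable hF)).aestronglyMeasurable
    · rw [norm_mul, norm_chr, one_mul, norm_mul]
      exact mul_le_mul_of_nonneg_right ((hpart n).2.1 ω) (norm_nonneg _)
    · exact ((hlim ω).mul_const _).const_mul _

theorem IsM.exp_sub_one (hp : 1 ≤ p) (hΞ : Measurable Ξ) {a : Ω → ℂ} {A : ℝ≥0}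
    (ha : IsM p ν Ξ a A) :
    IsM p ν Ξ (fun ω => Complex.exp (a ω) - 1) (Real.toNNReal (Real.exp A - 1)) := by
  have h1 : ∀ n : ℕ, IsM p ν Ξ (fun ω => ((n + 1).factorial : ℂ)⁻¹ * a ω ^ (n + 1))
      (((n + 1).factorial : ℝ≥0)⁻¹ * A ^ (n + 1)) := fun n => by
    have := (isM_const (ν := ν) (Ξ := Ξ) hp (((n + 1).factorial : ℂ)⁻¹)).mul (ha.pow hp (n + 1))
    simpa using this
  refine IsM.hasSum hp hΞ h1 ?_ fun ω => ?_
  · have h := NormedSpace.expSeries_div_hasSum_exp (A : ℝ)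
    rw [← Real.exp_eq_exp_ℝ, ← hasSum_nat_add_iff' 1] at h
    rw [← NNReal.hasSum_coe, Real.coe_toNNReal _ (by
      have := Real.add_one_le_exp (A : ℝ)
      have := A.2
      linarith [A.coe_nonneg])]
    simp only [Finset.range_one, Finset.sum_singleton, pow_zero, Nat.factorial_zero,
      Nat.cast_one, div_one] at h
    refine hasSum_cv h (fun n => ?_) rfl
    push_cast
    rw [div_eq_inv_mul]
  · have h := NormedSpace.expSeries_div_hasSum_exp (a ω)
    rw [← Complex.exp_eq_exp_ℂ, ← hasSum_nat_add_iff' 1] at h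
    simp only [Finset.range_one, Finset.sum_singleton, pow_zero, Nat.factorial_zero,
      Nat.cast_one, div_one] at h
    refine hasSum_cv h (fun n => ?_) rfl
    rw [div_eq_inv_mul]

theorem isM_cos (hp : 1 ≤ p) (hΞ : Measurable Ξ) (i : Fin d) (n : ℤ) (b : ℝ) :
    IsM p ν Ξ (fun ω => (Real.cos (2 * Real.pi * (n * Ξ ω i) + b) : ℂ)) 1 := by
  have h1 := (isM_const (ν := ν) (Ξ := Ξ) hp (Complex.exp (b * Complex.I) / 2)).mul
    (isM_chr hp hΞ (Pi.single i (-n)))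
  have h2 := (isM_const (ν := ν) (Ξ := Ξ) hp (Complex.exp ((-b : ℝ) * Complex.I) / 2)).mul
    (isM_chr hp hΞ (Pi.single i n))
  have h3 := h1.add hp hΞ h2
  have hs : ∀ (k : ℤ) ω, chr (Pi.single i k) (Ξ ω)
      = Complex.exp (((-(2 * Real.pi * (Ξ ω i * k)) : ℝ) : ℂ) * Complex.I) := by
    intro k ω
    unfold chr
    congr 5
    rw [Finset.sum_eq_single i] <;> simp +contextual
  convert h3 using 1
  · funext ω
    rw [hs, hs, Complex.ofReal_cos, Complex.cos, div_mul_eq_mul_div, div_mul_eq_mul_div,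
      ← Complex.exp_add, ← Complex.exp_add, add_div]
    congr 3 <;> (push_cast; ring)
  · ext
    rw [NNReal.coe_add, NNReal.coe_mul, NNReal.coe_mul, coe_nnnorm, coe_nnnorm]
    simp only [norm_div, Complex.norm_exp_ofReal_mul_I]
    norm_num

theorem bern_lin {x : ℝ} (hx : x ∈ Set.Icc (1/4 : ℝ) (3/4)) :
    HasSum (fun n : ℕ => 1 / (n : ℝ) ^ 2 * (Real.cos (2 * Real.pi * n * (x + 1/4)) -
      Real.cos (2 * Real.pi * n * (x - 1/4)))) (Real.pi ^ 2 * (x - 1/2)) := by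
  have h1 := hasSum_one_div_nat_pow_mul_cos (k := 1) one_ne_zero (x := x + 1/4)
    ⟨by linarith [hx.1], by linarith [hx.2]⟩
  have h2 := hasSum_one_div_nat_pow_mul_cos (k := 1) one_ne_zero (x := x - 1/4)
    ⟨by linarith [hx.1], by linarith [hx.2]⟩
  have hB : ∀ y : ℝ, Polynomial.eval y (Polynomial.map (algebraMap ℚ ℝ)
      (Polynomial.bernoulli (2 * 1))) = y ^ 2 - y + 1/6 := by
    intro y
    simp [Polynomial.bernoulli, Finset.sum_range_succ, bernoulli_eq_bernoulli'_of_ne_one]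
    ring
  rw [hB] at h1 h2
  have h3 := h1.sub h2
  refine hasSum_cv h3 (fun n => ?_) ?_
  · ring
  · norm_num [Nat.factorial]; ring

theorem isM_lin (hp : 1 ≤ p) (hΞ : Measurable Ξ) (i : Fin d) (L : ℕ) (hL : 0 < L) (c : ℝ)
    (hc : ∀ ω, |Ξ ω i - c| ≤ 1 / (4 * L)) :
    IsM p ν Ξ (fun ω => ((Ξ ω i - c : ℝ) : ℂ)) (1 / (3 * L)) := by
  have hL' : (0 : ℝ) < L := by exact_mod_cast hL
  have key : ∀ n : ℕ, IsM p ν Ξ (fun ω => ((1 / (L * Real.pi ^ 2) * (1 / (n : ℝ) ^ 2) : ℝ) : ℂ) *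
      ((Real.cos (2 * Real.pi * (((n * L : ℕ) : ℤ) * Ξ ω i) +
          2 * Real.pi * n * (3 / 4 - L * c)) : ℂ) + ((-1 : ℝ) : ℂ) *
        (Real.cos (2 * Real.pi * (((n * L : ℕ) : ℤ) * Ξ ω i) +
          2 * Real.pi * n * (1 / 4 - L * c)) : ℂ)))
      (‖((1 / (L * Real.pi ^ 2) * (1 / (n : ℝ) ^ 2) : ℝ) : ℂ)‖₊ * (1 + ‖((-1 : ℝ) : ℂ)‖₊ * 1)) :=
    fun n => (isM_const hp _).mul ((isM_cos hp hΞ i _ _).add hp hΞ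
      ((isM_const hp _).mul (isM_cos hp hΞ i _ _)))
  refine IsM.hasSum hp hΞ key ?_ fun ω => ?_
  · rw [← NNReal.hasSum_coe]
    have := (hasSum_zeta_two.mul_left (1 / (L * Real.pi ^ 2))).mul_right 2
    refine hasSum_cv this (fun n => ?_) ?_
    · simp only [NNReal.coe_mul, NNReal.coe_add, NNReal.coe_one, coe_nnnorm, Complex.norm_real,
        Real.norm_eq_abs, abs_neg, abs_one]
      rw [abs_of_nonneg (by positivity)]
      norm_num
    · push_cast
      have := Real.pi_pos
      field_simp
      norm_num
  · have hb := abs_le.1 (hc ω)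
    have e : (L : ℝ) * (1 / (4 * L)) = 1 / 4 := by field_simp
    have hx : L * (Ξ ω i - c) + 1/2 ∈ Set.Icc (1/4 : ℝ) (3/4) := by
      constructor
      · have := mul_le_mul_of_nonneg_left hb.1 hL'.le
        linarith
      · have := mul_le_mul_of_nonneg_left hb.2 hL'.le
        linarith
    have h := (bern_lin hx).mul_left (1 / (L * Real.pi ^ 2))
    have h' := Complex.hasSum_ofReal.2 h
    refine hasSum_cv h' (fun n => ?_) ?_
    · push_cast
      rw [mul_assoc]
      congr 2
      rw [neg_one_mul, ← sub_eq_add_neg]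
      congr 2 <;> ring
    · congr 1
      have := Real.pi_pos
      field_simp
      ring

end mult

theorem shift_est {d : ℕ} {Ω : Type*} [MeasurableSpace Ω] {p : ℝ} {ν : Measure Ω}
    {Ξ : Ω → Fin d → ℝ} (hp : 1 ≤ p) (hΞ : Measurable Ξ) (hd : 0 < d) (Q : ℕ) (hQ : 1 ≤ Q)
    (c : Fin d → ℝ) (hc : ∀ ω i, |Ξ ω i - c i| ≤ 1 / (4 * (6 * d * Q ^ (d + 1) : ℕ)))
    (u : Fin d → ℤ) (hu : ∀ i, |u i| ≤ Q) (F : Ω → ℂ) (hF : Integrable F ν) :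
    ∃ e : ℂ, ‖e‖ = 1 ∧ lpN p (fun x => e * trf ν Ξ F (x + u) - trf ν Ξ F x) ≤
      ENNReal.ofReal (1 / 2 / (Q : ℝ) ^ d) * lpN p (trf ν Ξ F) := by
  set L : ℕ := 6 * d * Q ^ (d + 1) with hLdef
  have hL : 0 < L := by positivity
  have hLr : (0 : ℝ) < L := by exact_mod_cast hL
  have hQr : (1 : ℝ) ≤ Q := by exact_mod_cast hQ
  have hdr : (0 : ℝ) < d := by exact_mod_cast hd
  have h1 : ∀ i, IsM p ν Ξ (fun ω => ((-(2 * Real.pi * u i) : ℝ) * Complex.I) *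
      ((Ξ ω i - c i : ℝ) : ℂ)) (‖((-(2 * Real.pi * u i) : ℝ) * Complex.I)‖₊ * (1 / (3 * L))) :=
    fun i => (isM_const hp _).mul (isM_lin hp hΞ i L hL (c i) fun ω => hc ω i)
  have h2 := (IsM.sum hp hΞ Finset.univ h1).exp_sub_one hp hΞ
  set A : ℝ≥0 := ∑ i, ‖((-(2 * Real.pi * u i) : ℝ) * Complex.I)‖₊ * (1 / (3 * L)) with hA
  have hpi := Real.pi_pos
  have hAle : (A : ℝ) ≤ 0.35 / (Q : ℝ) ^ d := by
    have : (A : ℝ) ≤ ∑ i : Fin d, (2 * Real.pi * Q) * (1 / (3 * L)) := by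
      rw [hA]
      push_cast
      refine Finset.sum_le_sum fun i _ => ?_
      refine mul_le_mul_of_nonneg_right ?_ (by positivity)
      have : (|(u i : ℝ)|) ≤ Q := by exact_mod_cast hu i
      simp only [norm_mul, norm_neg, Complex.norm_I, mul_one, Complex.norm_real, Complex.norm_ofNat,
        Complex.norm_intCast, Real.norm_eq_abs, abs_of_pos hpi]
      gcongr
    refine this.trans ?_
    rw [Finset.sum_const, Finset.card_univ, Fintype.card_fin, nsmul_eq_mul, hLdef]
    push_cast
    have e : (d : ℝ) * (2 * Real.pi * Q * (1 / (3 * (6 * d * (Q : ℝ) ^ (d + 1))))) =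
      (Real.pi / 9) / (Q : ℝ) ^ d := by
      field_simp
      ring
    rw [e]
    gcongr
    have := Real.pi_lt_d2
    linarith
  have hA1 : (A : ℝ) ≤ 0.35 := hAle.trans (div_le_self (by norm_num) (one_le_pow₀ hQr))
  have hexp : Real.exp A - 1 ≤ 1 / 2 / (Q : ℝ) ^ d := by
    have hA0 : (0 : ℝ) ≤ A := A.coe_nonneg
    have := (abs_le.1 (Real.abs_exp_sub_one_sub_id_le (x := A)
      (by rw [abs_of_nonneg hA0]; linarith))).2
    have h3 : Real.exp A - 1 ≤ 1.35 * A := by nlinarith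
    have : (1.35 : ℝ) * (0.35 / (Q : ℝ) ^ d) ≤ 1 / 2 / (Q : ℝ) ^ d := by
      rw [← mul_div_assoc]
      gcongr
      norm_num
    linarith
  refine ⟨Complex.exp (((2 * Real.pi * ∑ i, c i * u i : ℝ) : ℂ) * Complex.I),
    Complex.norm_exp_ofReal_mul_I _, ?_⟩
  have h4 := h2.2.2 F hF
  refine (le_of_eq ?_).trans (h4.trans ?_)
  · congr 1
    funext x
    have i1 := integrable_chr hΞ x hF
    have i2 := integrable_chr hΞ (x + u) hF
    unfold trf
    rw [← integral_const_mul, ← integral_sub (i2.const_mul _) i1]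
    congr 1
    funext ω
    have : Complex.exp (∑ i, ((-(2 * Real.pi * u i) : ℝ) * Complex.I) * ((Ξ ω i - c i : ℝ) : ℂ)) =
        Complex.exp (((2 * Real.pi * ∑ i, c i * u i : ℝ) : ℂ) * Complex.I) * chr u (Ξ ω) := by
      unfold chr
      rw [← Complex.exp_add]
      congr 1
      push_cast
      simp only [Finset.mul_sum, Finset.sum_mul, ← Finset.sum_neg_distrib,
        ← Finset.sum_add_distrib]
      refine Finset.sum_congr rfl fun i _ => ?_
      ring
    beta_reduce
    rw [this]
    have := chr_add x u (Ξ ω)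
    change chr (x + u) (Ξ ω) = _ at this
    rw [this]
    ring
  · gcongr
    exact ENNReal.coe_le_coe.2 (Real.toNNReal_le_toNNReal hexp)

theorem lpN_partition {d : ℕ} {p : ℝ} (hp : 1 ≤ p) (Q : ℕ) (hQ : 1 ≤ Q)
    (g : (Fin d → ℤ) → ℂ) :
    lpN p g = (∑ r : Fin d → Fin Q,
      lpN p (fun x : Fin d → ℤ => g (fun i => (Q : ℤ) * x i + (r i : ℕ))) ^ p) ^ (1 / p) := by
  have h0 : p ≠ 0 := by linarith
  have : NeZero Q := ⟨by omega⟩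
  unfold lpN
  simp_rw [← ENNReal.rpow_mul, one_div_mul_cancel h0, ENNReal.rpow_one]
  congr 1
  let e : (Fin d → ℤ) ≃ (Fin d → ℤ) × (Fin d → Fin Q) :=
    (Equiv.piCongrRight fun _ => Int.divModEquiv Q).trans
      (Equiv.arrowProdEquivProdArrow _ _ _)
  rw [← e.symm.tsum_eq, ← tsum_fintype (L := SummationFilter.unconditional _), ENNReal.tsum_comm, ← ENNReal.tsum_prod]
  refine tsum_congr fun z => ?_
  congr 3
  funext i
  simp [e, Equiv.arrowProdEquivProdArrow, Int.divModEquiv, mul_comm]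

theorem sampling_abs {d : ℕ} {p : ℝ} (hp : 1 ≤ p) (Q : ℕ) (hQ : 1 ≤ Q)
    (g : (Fin d → ℤ) → ℂ)
    (H : ∀ u : Fin d → ℤ, (∀ i, |u i| ≤ Q) → ∃ e : ℂ, ‖e‖ = 1 ∧
      lpN p (fun x => e * g (x + u) - g x) ≤ ENNReal.ofReal (1 / 2 / (Q : ℝ) ^ d) * lpN p g)
    (m : Fin d → ℤ) (hm : ∀ i, 1 ≤ m i ∧ m i ≤ (Q : ℤ)) :
    (Q : ℝ≥0∞) ^ ((d : ℝ) / p) * lpN p (fun x : Fin d → ℤ => g (fun i => (Q : ℤ) * x i + m i))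
      ≤ lpN p g + 1 / 2 * lpN p g ∧
    lpN p g ≤ (Q : ℝ≥0∞) ^ ((d : ℝ) / p) *
      lpN p (fun x : Fin d → ℤ => g (fun i => (Q : ℤ) * x i + m i)) + 1 / 2 * lpN p g := by
  have hp0 : 0 < p := by linarith
  have h0 : p ≠ 0 := by linarith
  have hp' : 0 ≤ 1 / p := by positivity
  have hQr : (1 : ℝ) ≤ Q := by exact_mod_cast hQ
  set A := lpN p (fun x : Fin d → ℤ => g (fun i => (Q : ℤ) * x i + m i)) with hA
  set a : (Fin d → Fin Q) → ℝ≥0∞ := fun r =>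
    lpN p (fun x : Fin d → ℤ => g (fun i => (Q : ℤ) * x i + (r i : ℕ))) with ha
  set E : ℝ≥0∞ := ENNReal.ofReal (1 / 2 / (Q : ℝ) ^ d) * lpN p g with hE
  have hpart : lpN p g = (∑ r, a r ^ p) ^ (1 / p) := lpN_partition hp Q hQ g
  have hconst : ∀ C : ℝ≥0∞, (∑ _r : Fin d → Fin Q, C ^ p) ^ (1 / p) =
      (Q : ℝ≥0∞) ^ ((d : ℝ) / p) * C := by
    intro C
    rw [Finset.sum_const, Finset.card_univ, Fintype.card_fun, Fintype.card_fin, Fintype.card_fin,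
      nsmul_eq_mul, ENNReal.mul_rpow_of_nonneg _ _ hp', ← ENNReal.rpow_mul,
      mul_one_div_cancel h0, ENNReal.rpow_one]
    push_cast
    rw [← ENNReal.rpow_natCast, ← ENNReal.rpow_mul, mul_one_div]
  have hqE : (Q : ℝ≥0∞) ^ ((d : ℝ) / p) * E ≤ 1 / 2 * lpN p g := by
    rw [hE, ← mul_assoc]
    gcongr
    calc (Q : ℝ≥0∞) ^ ((d : ℝ) / p) * ENNReal.ofReal (1 / 2 / (Q : ℝ) ^ d)
        ≤ (Q : ℝ≥0∞) ^ (d : ℝ) * ENNReal.ofReal (1 / 2 / (Q : ℝ) ^ d) := by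
          gcongr
          · exact_mod_cast hQ
          · exact div_le_self (by positivity) hp
      _ = 1 / 2 := by
          rw [ENNReal.rpow_natCast, ← ENNReal.ofReal_natCast, ← ENNReal.ofReal_pow (by positivity),
            ← ENNReal.ofReal_mul (by positivity), mul_div_cancel₀ _ (by positivity)]
          rw [ENNReal.ofReal_div_of_pos (by norm_num)]
          simp
  have hinj : Function.Injective (fun (x : Fin d → ℤ) (i : Fin d) => (Q : ℤ) * x i + m i) := by
    intro x y hxy
    funext i
    have := congrFun hxy i
    simp only [add_left_inj] at this
    exact mul_left_cancel₀ (by positivity) this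
  have hcmp : ∀ r, a r ≤ A + E ∧ A ≤ a r + E := by
    intro r
    obtain ⟨e, he, hle⟩ := H (fun i => (r i : ℕ) - m i) (fun i => by
      have := (r i).2
      have := hm i
      rw [abs_le]
      omega)
    have hD := (lpN_comp_inj hp _ hinj).trans hle
    have hsh : ∀ x : Fin d → ℤ, (fun i => (Q : ℤ) * x i + m i) + (fun i => ((r i : ℕ) : ℤ) - m i)
        = fun i => (Q : ℤ) * x i + (r i : ℕ) := by
      intro x; funext i; simp
    simp only [hsh] at hD
    have har : a r = lpN p (fun x : Fin d → ℤ => e * g (fun i => (Q : ℤ) * x i + (r i : ℕ))) := by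
      rw [lpN_smul hp, enorm_eq_nnnorm]
      have : ‖e‖₊ = 1 := by ext; simpa using he
      rw [this, ENNReal.coe_one, one_mul]
    constructor
    · rw [har, add_comm]
      refine le_trans ?_ ((lpN_add hp _ _).trans (add_le_add hD le_rfl))
      simp
    · rw [har]
      have hD' : lpN p (fun x : Fin d → ℤ => -(e * g (fun i => (Q : ℤ) * x i + (r i : ℕ)) -
          g (fun i => (Q : ℤ) * x i + m i))) ≤ E :=
        (lpN_mono hp (fun x => (norm_neg _).le)).trans hD
      refine le_trans ?_ ((lpN_add hp _ _).trans (add_le_add le_rfl hD'))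
      simp [hA]
  constructor
  · calc (Q : ℝ≥0∞) ^ ((d : ℝ) / p) * A = (∑ _r : Fin d → Fin Q, A ^ p) ^ (1 / p) := (hconst A).symm
      _ ≤ (∑ r : Fin d → Fin Q, (a r + E) ^ p) ^ (1 / p) := by
          gcongr with r _
          exact (hcmp r).2
      _ ≤ _ := ENNReal.Lp_add_le _ _ _ hp
      _ ≤ _ := by
          rw [← hpart, hconst E]
          gcongr
  · calc lpN p g = (∑ r : Fin d → Fin Q, a r ^ p) ^ (1 / p) := hpart
      _ ≤ (∑ r : Fin d → Fin Q, (A + E) ^ p) ^ (1 / p) := by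
          gcongr with r _
          exact (hcmp r).1
      _ ≤ _ := ENNReal.Lp_add_le _ _ _ hp
      _ ≤ _ := by
          rw [hconst A, hconst E]
          gcongr

theorem tsum_prod_pi (b : ℤ → ℝ≥0∞) (d : ℕ) :
    ∑' x : Fin d → ℤ, ∏ i, b (x i) = (∑' k, b k) ^ d := by
  induction d with
  | zero => simp
  | succ d ih =>
    rw [← (Fin.consEquiv (fun _ : Fin (d + 1) => ℤ)).tsum_eq]
    simp only [Fin.consEquiv, Equiv.coe_fn_mk, Fin.prod_univ_succ, Fin.cons_zero, Fin.cons_succ]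
    rw [ENNReal.tsum_prod (f := fun (a : ℤ) (y : Fin d → ℤ) => b a * ∏ i, b (y i))]
    simp_rw [ENNReal.tsum_mul_left, ENNReal.tsum_mul_right, ih, pow_succ, mul_comm]

/-- one-dimensional building block of the regularizing factor -/
def sfac (δ : ℝ) (k : ℤ) : ℂ :=
  ∫ t : unitInterval, Complex.exp (((-(2 * Real.pi * (δ * t * k)) : ℝ) : ℂ) * Complex.I)

theorem norm_sfac_le (δ : ℝ) (k : ℤ) : ‖sfac δ k‖ ≤ 1 := by
  unfold sfac
  refine (norm_integral_le_of_norm_le_const (C := 1) (Eventually.of_forall fun t => ?_)).trans ?_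
  · rw [Complex.norm_exp_ofReal_mul_I]
  · simp

theorem norm_sfac_le' {δ : ℝ} (hδ : 0 < δ) {k : ℤ} (hk : k ≠ 0) :
    ‖sfac δ k‖ ^ 2 ≤ (1 / (Real.pi * δ)) ^ 2 * (1 / (k : ℝ) ^ 2) := by
  have hpi := Real.pi_pos
  have hk' : (k : ℝ) ≠ 0 := by exact_mod_cast hk
  set c : ℂ := ((-(2 * Real.pi * (δ * k)) : ℝ) : ℂ) * Complex.I with hc
  have hc0 : c ≠ 0 := by
    rw [hc]
    refine mul_ne_zero ?_ Complex.I_ne_zero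
    rw [Complex.ofReal_ne_zero]
    simp [hpi.ne', hδ.ne', hk]
  have h1 : sfac δ k = (Complex.exp (c * (1 : ℝ)) - Complex.exp (c * (0 : ℝ))) / c := by
    rw [← integral_exp_mul_complex hc0, intervalIntegral.integral_of_le zero_le_one,
      ← integral_Icc_eq_integral_Ioc]
    have := integral_subtype_comap (μ := (volume : Measure ℝ)) (s := unitInterval)
      measurableSet_Icc (fun t : ℝ => Complex.exp (c * t))
    unfold sfac
    refine Eq.trans ?_ this
    congr 1
    funext t
    congr 1
    rw [hc]
    push_cast
    ring
  have h2 : ‖Complex.exp (c * (1 : ℝ)) - Complex.exp (c * (0 : ℝ))‖ ≤ 2 := by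
    refine (norm_sub_le _ _).trans ?_
    rw [Complex.ofReal_one, mul_one, Complex.ofReal_zero, mul_zero, Complex.exp_zero, hc,
      Complex.norm_exp_ofReal_mul_I]
    norm_num
  have h3 : ‖c‖ = 2 * Real.pi * δ * |(k : ℝ)| := by
    rw [hc, norm_mul, Complex.norm_I, mul_one, Complex.norm_real, Real.norm_eq_abs, abs_neg,
      abs_mul, abs_mul, abs_of_pos hpi, abs_mul, abs_of_pos hδ]
    norm_num
    ring
  have hka : 0 < |(k : ℝ)| := abs_pos.2 hk'
  have h4 : ‖sfac δ k‖ ≤ 1 / (Real.pi * δ) * (1 / |(k : ℝ)|) := by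
    rw [h1, norm_div, h3, div_le_iff₀ (by positivity)]
    refine h2.trans (le_of_eq ?_)
    field_simp
  calc ‖sfac δ k‖ ^ 2 ≤ (1 / (Real.pi * δ) * (1 / |(k : ℝ)|)) ^ 2 := by gcongr
    _ = _ := by rw [mul_pow, div_pow 1 |(k : ℝ)|, sq_abs, one_pow]

theorem tsum_sfac {δ : ℝ} (hδ : 0 < δ) : ∑' k : ℤ, ‖sfac δ k‖ₑ ^ 2 ≠ ⊤ := by
  have hs : Summable (fun k : ℤ => ‖sfac δ k‖ ^ 2) := by
    have h1 : Summable (fun k : ℤ => (1 / (Real.pi * δ)) ^ 2 * (1 / (k : ℝ) ^ 2)) :=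
      (Real.summable_one_div_int_pow.2 (by norm_num : 1 < 2)).mul_left _
    have h2 : Summable (fun k : ℤ => if k = 0 then (1 : ℝ) else 0) :=
      summable_of_ne_finset_zero (s := {0}) (by intro k hk; simp at hk; simp [hk])
    refine Summable.of_nonneg_of_le (fun k => by positivity) (fun k => ?_) (h2.add h1)
    by_cases hk : k = 0
    · subst hk
      simp only [if_true]
      have := norm_sfac_le δ 0
      have h0 : ‖sfac δ 0‖ ^ 2 ≤ 1 := pow_le_one₀ (norm_nonneg _) this
      have : (0 : ℝ) ≤ (1 / (Real.pi * δ)) ^ 2 * (1 / ((0 : ℤ) : ℝ) ^ 2) := by positivity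
      linarith
    · simp only [hk, if_false, zero_add]
      exact norm_sfac_le' hδ hk
  have := hs.tsum_ofReal_ne_top
  convert this using 3 with k
  rw [ENNReal.ofReal_pow (norm_nonneg _), ofReal_norm]

/-- frequency map of the regularizing factor -/
def Zmap (d : ℕ) (δ : ℝ) (z : Fin d → unitInterval × unitInterval) (i : Fin d) : ℝ :=
  δ * ((z i).1 : ℝ) + δ * ((z i).2 : ℝ)

theorem measurable_Zmap (d : ℕ) (δ : ℝ) : Measurable (Zmap d δ) := by
  unfold Zmap
  fun_prop

/-- the regularizing factor -/
def theta (d : ℕ) (δ : ℝ) (x : Fin d → ℤ) : ℂ :=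
  trf (volume : Measure (Fin d → unitInterval × unitInterval)) (Zmap d δ) (fun _ => 1) x

theorem theta_eq (d : ℕ) (δ : ℝ) (x : Fin d → ℤ) : theta d δ x = ∏ i, sfac δ (x i) ^ 2 := by
  have h := integral_fintype_prod_eq_prod (𝕜 := ℂ) (ι := Fin d)
    (E := fun _ => unitInterval × unitInterval)
    (fun i z => Complex.exp (((-(2 * Real.pi * (δ * z.1 * x i)) : ℝ) : ℂ) * Complex.I) *
      Complex.exp (((-(2 * Real.pi * (δ * z.2 * x i)) : ℝ) : ℂ) * Complex.I))
    (μ := fun _ => volume)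
  have h2 : ∀ i, ∫ z : unitInterval × unitInterval,
      Complex.exp (((-(2 * Real.pi * (δ * z.1 * x i)) : ℝ) : ℂ) * Complex.I) *
      Complex.exp (((-(2 * Real.pi * (δ * z.2 * x i)) : ℝ) : ℂ) * Complex.I) = sfac δ (x i) ^ 2 := by
    intro i
    rw [pow_two]
    exact integral_prod_mul (μ := (volume : Measure unitInterval))
      (ν := (volume : Measure unitInterval))
      (fun t : unitInterval =>
        Complex.exp (((-(2 * Real.pi * (δ * t * x i)) : ℝ) : ℂ) * Complex.I))
      (fun t : unitInterval =>
        Complex.exp (((-(2 * Real.pi * (δ * t * x i)) : ℝ) : ℂ) * Complex.I))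
  simp_rw [h2] at h
  rw [← h]
  unfold theta trf
  change ∫ z, _ ∂(Measure.pi fun _ => volume) = _
  congr 1
  funext z
  unfold chr Zmap
  rw [mul_one]
  simp_rw [← Complex.exp_add]
  rw [← Complex.exp_sum]
  congr 1
  push_cast
  simp only [Finset.mul_sum, Finset.sum_mul, ← Finset.sum_neg_distrib]
  refine Finset.sum_congr rfl fun i _ => ?_
  ring

theorem norm_theta_le (d : ℕ) (δ : ℝ) (x : Fin d → ℤ) : ‖theta d δ x‖ ≤ 1 := by
  rw [theta_eq, norm_prod]
  refine Finset.prod_le_one (fun _ _ => norm_nonneg _) fun i _ => ?_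
  rw [norm_pow]
  exact pow_le_one₀ (norm_nonneg _) (norm_sfac_le _ _)

theorem lpN_theta {d : ℕ} {δ : ℝ} (hδ : 0 < δ) {p : ℝ} (hp : 1 ≤ p) : lpN p (theta d δ) ≠ ⊤ := by
  unfold lpN
  have hp' : 0 ≤ 1 / p := by positivity
  refine ENNReal.rpow_ne_top_of_nonneg hp' ?_
  have : ∑' x : Fin d → ℤ, ‖theta d δ x‖ₑ ^ p ≤ ∑' x : Fin d → ℤ, ∏ i, ‖sfac δ (x i)‖ₑ ^ 2 := by
    refine ENNReal.tsum_le_tsum fun x => ?_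
    have h1 : ‖theta d δ x‖ₑ ≤ 1 := by
      have := norm_theta_le d δ x
      rw [← ofReal_norm]
      exact ENNReal.ofReal_le_one.2 this
    calc ‖theta d δ x‖ₑ ^ p ≤ ‖theta d δ x‖ₑ ^ (1 : ℝ) :=
          ENNReal.rpow_le_rpow_of_exponent_ge h1 hp
      _ = ‖theta d δ x‖ₑ := ENNReal.rpow_one _
      _ = _ := by
          rw [theta_eq, ← ofReal_norm, norm_prod,
            ENNReal.ofReal_prod_of_nonneg (fun _ _ => norm_nonneg _)]
          refine Finset.prod_congr rfl fun i _ => ?_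
          rw [norm_pow, ENNReal.ofReal_pow (norm_nonneg _), ofReal_norm]
  refine ne_top_of_le_ne_top ?_ this
  rw [tsum_prod_pi (fun k => ‖sfac δ k‖ₑ ^ 2) d]
  exact ENNReal.pow_ne_top (tsum_sfac hδ)

theorem theta_tendsto (d : ℕ) (δ : ℕ → ℝ) (hδ : Tendsto δ atTop (𝓝 0)) (x : Fin d → ℤ) :
    Tendsto (fun n => theta d (δ n) x) atTop (𝓝 1) := by
  have h1 : (1 : ℂ) = ∫ _z : Fin d → unitInterval × unitInterval, (1 : ℂ) := by simp
  rw [h1]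
  refine tendsto_integral_of_dominated_convergence (fun _ => 1) (fun n => ?_)
    (integrable_const _) (fun n => Eventually.of_forall fun ω => ?_)
    (Eventually.of_forall fun z => ?_)
  · exact ((measurable_chr x (measurable_Zmap d (δ n))).mul_const 1).aestronglyMeasurable
  · rw [mul_one, norm_chr]
  · have hc : Continuous (fun t : ℝ => chr x (Zmap d t z) * 1) := by
      unfold chr Zmap
      fun_prop
    have := (hc.tendsto 0).comp hδ
    have e : chr x (Zmap d 0 z) * 1 = 1 := by
      unfold chr Zmap
      simp
    rw [e] at this
    exact this

theorem sampling_core {d : ℕ} {Ω : Type*} [MeasurableSpace Ω] {p : ℝ} {ν : Measure Ω} [SFinite ν]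
    {Ξ : Ω → Fin d → ℝ} (hp : 1 ≤ p) (hΞ : Measurable Ξ) (hd : 0 < d) (Q : ℕ) (hQ : 1 ≤ Q)
    (hbox : ∀ ω i, 0 ≤ Ξ ω i ∧ Ξ ω i ≤ 1 / (16 * d * (Q : ℝ) ^ (d + 1)))
    (F : Ω → ℂ) (hF : Integrable F ν) (m : Fin d → ℤ) (hm : ∀ i, 1 ≤ m i ∧ m i ≤ (Q : ℤ)) :
    (Q : ℝ≥0∞) ^ ((d : ℝ) / p) *
      lpN p (fun x : Fin d → ℤ => trf ν Ξ F (fun i => (Q : ℤ) * x i + m i)) ≤ 2 * lpN p (trf ν Ξ F) ∧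
    lpN p (trf ν Ξ F) ≤ 2 * ((Q : ℝ≥0∞) ^ ((d : ℝ) / p) *
      lpN p (fun x : Fin d → ℤ => trf ν Ξ F (fun i => (Q : ℤ) * x i + m i))) := by
  have hQr : (1 : ℝ) ≤ Q := by exact_mod_cast hQ
  have hdr : (0 : ℝ) < d := by exact_mod_cast hd
  set K : ℝ := d * (Q : ℝ) ^ (d + 1) with hK
  have hK0 : 0 < K := by positivity
  have e16 : 1 / (16 * d * (Q : ℝ) ^ (d + 1)) = (1 / 16) * (1 / K) := by
    rw [hK]; field_simp
  have e24 : 1 / (4 * ((6 * d * Q ^ (d + 1) : ℕ) : ℝ)) = (1 / 24) * (1 / K) := by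
    rw [hK]; push_cast; field_simp; norm_num
  have hK1 : 0 < 1 / K := by positivity
  constructor
  · have h := (sampling_abs hp Q hQ (trf ν Ξ F) (fun u hu => shift_est hp hΞ hd Q hQ
      (fun _ => (1 / 32) * (1 / K)) (fun ω i => by
        have := hbox ω i
        rw [e16] at this
        rw [e24, abs_le]
        constructor <;> linarith) u hu F hF) m hm).1
    refine h.trans ?_
    rw [two_mul]
    gcongr
    exact mul_le_of_le_one_left (by simp) (by simp)
  · set g := trf ν Ξ F with hg
    set δ : ℕ → ℝ := fun n => (1 / 96) * (1 / K) * (1 / ((n : ℝ) + 1)) with hδ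
    have hδ0 : ∀ n, 0 < δ n := fun n => by simp only [hδ]; positivity
    have hδ1 : ∀ n, δ n ≤ (1 / 96) * (1 / K) := fun n => by
      simp only [hδ]
      refine mul_le_of_le_one_right (by positivity) ?_
      rw [div_le_one (by positivity)]
      linarith [(Nat.cast_nonneg n : (0 : ℝ) ≤ n)]
    have hδl : Tendsto δ atTop (𝓝 0) := by
      have := (tendsto_one_div_add_atTop_nhds_zero_nat (𝕜 := ℝ)).const_mul ((1 / 96) * (1 / K))
      simpa [hδ] using this
    refine lpN_lim hp (fun n x => g x * theta d (δ n) x) g _ (fun n => ?_) (fun x => ?_)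
    swap
    · simpa using (theta_tendsto d δ hδl x).const_mul (g x)
    have hprod : (fun x => g x * theta d (δ n) x) =
        trf (ν.prod (volume : Measure (Fin d → unitInterval × unitInterval)))
          (fun z i => Ξ z.1 i + Zmap d (δ n) z.2 i) (fun z => F z.1) := by
      funext x
      have := integral_prod_mul (μ := ν)
        (ν := (volume : Measure (Fin d → unitInterval × unitInterval)))
        (fun ω => chr x (Ξ ω) * F ω) (fun z => chr x (Zmap d (δ n) z) * 1)
      rw [hg]
      unfold theta trf
      rw [← this]
      congr 1
      funext z
      rw [chr_add_right]
      ring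
    have hmeas : Measurable (fun (z : Ω × (Fin d → unitInterval × unitInterval)) i =>
        Ξ z.1 i + Zmap d (δ n) z.2 i) := by
      refine measurable_pi_lambda _ fun i => ?_
      exact ((measurable_pi_apply i).comp (hΞ.comp measurable_fst)).add
        ((measurable_pi_apply i).comp ((measurable_Zmap d (δ n)).comp measurable_snd))
    have hint : Integrable (fun z : Ω × (Fin d → unitInterval × unitInterval) => F z.1)
        (ν.prod (volume : Measure (Fin d → unitInterval × unitInterval))) := hF.comp_fst _
    have h := (sampling_abs hp Q hQ _ (fun u hu => shift_est hp hmeas hd Q hQ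
      (fun _ => (1 / 32) * (1 / K) + δ n) (fun z i => by
        have := hbox z.1 i
        rw [e16] at this
        have h1 := hδ1 n
        have h0 := hδ0 n
        have a1 := (z.2 i).1.2
        have a2 := (z.2 i).2.2
        have b1 : 0 ≤ Zmap d (δ n) z.2 i :=
          add_nonneg (mul_nonneg h0.le a1.1) (mul_nonneg h0.le a2.1)
        have b2 : Zmap d (δ n) z.2 i ≤ δ n + δ n :=
          add_le_add (mul_le_of_le_one_right h0.le a1.2) (mul_le_of_le_one_right h0.le a2.2)
        rw [e24, abs_le]
        constructor <;> linarith) u hu _ hint) m hm).2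
    rw [← hprod] at h
    set N := lpN p (fun x => g x * theta d (δ n) x) with hN
    have hfin : N ≠ ⊤ := by
      have hb : ∀ x, ‖g x‖ ≤ ∫ ω, ‖F ω‖ ∂ν := fun x => by
        refine (norm_integral_le_integral_norm _).trans (le_of_eq ?_)
        congr 1; funext ω
        rw [norm_mul, norm_chr, one_mul]
      have hb0 : 0 ≤ ∫ ω, ‖F ω‖ ∂ν := integral_nonneg fun _ => norm_nonneg _
      have : N ≤ lpN p (fun x => ((∫ ω, ‖F ω‖ ∂ν : ℝ) : ℂ) * theta d (δ n) x) := by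
        refine lpN_mono hp fun x => ?_
        rw [norm_mul, norm_mul, Complex.norm_real, Real.norm_of_nonneg hb0]
        gcongr
        exact hb x
      rw [lpN_smul hp] at this
      exact ne_top_of_le_ne_top (ENNReal.mul_ne_top enorm_ne_top (lpN_theta (hδ0 n) hp)) this
    have hN2 : N = 1 / 2 * N + 1 / 2 * N := by
      rw [← add_mul, ENNReal.add_halves, one_mul]
    have hhalf : 1 / 2 * N ≤ (Q : ℝ≥0∞) ^ ((d : ℝ) / p) * lpN p (fun x : Fin d → ℤ =>
        (fun x => g x * theta d (δ n) x) (fun i => (Q : ℤ) * x i + m i)) := by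
      have hf2 : 1 / 2 * N ≠ ⊤ := ENNReal.mul_ne_top (by simp) hfin
      refine (ENNReal.add_le_add_iff_right hf2).1 ?_
      rw [← hN2]
      exact h
    calc N = 1 / 2 * N + 1 / 2 * N := hN2
      _ = 2 * (1 / 2 * N) := (two_mul _).symm
      _ ≤ _ := by
        refine mul_le_mul_right (hhalf.trans (mul_le_mul_right ?_ _)) _
        refine lpN_mono hp fun x => ?_
        rw [norm_mul]
        exact mul_le_of_le_one_right (norm_nonneg _) (norm_theta_le _ _ _)

theorem discFourier_continuous (d : ℕ) (f : (Fin d → ℤ) → ℂ) (hf : (Function.support f).Finite) :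
    Continuous (discFourier d f) := by
  have : discFourier d f = fun ξ => ∑ y ∈ hf.toFinset,
      f y * Complex.exp (2 * Real.pi * Complex.I * (∑ i, ξ i * (y i : ℝ))) := by
    funext ξ
    unfold discFourier
    refine tsum_eq_sum fun y hy => ?_
    have : f y = 0 := by simpa using hy
    rw [this, zero_mul]
  rw [this]
  fun_prop

/-- **Sampling lemma (Lemma 3).**  If every diagonal entry of `R` is `≥ h ≥ 2Q^{d+1}` then for
every residue `m ∈ {1,…,Q}^d` the `ℓ^p` norm of `g = ℱ^{−1}(η(R·)f̂)` sampled along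
`Qℤ^d + m` is comparable to `Q^{−d/p}` times its full `ℓ^p` norm, with constants `1/2, 2`
independent of `Q`, `h`, `m` and `f`. -/
theorem statement10 (d : ℕ) (η φ ψ : EuclideanSpace ℝ (Fin d) → ℝ)
    (hφsm : ContDiff ℝ (⊤ : ℕ∞) φ) (hψsm : ContDiff ℝ (⊤ : ℕ∞) ψ)
    (hφ0 : ∀ x, 0 ≤ φ x) (hψ0 : ∀ x, 0 ≤ ψ x)
    (hφsupp : ∀ x : EuclideanSpace ℝ (Fin d), φ x ≠ 0 → ∀ i, |x i| < 1 / (8 * d))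
    (hψsupp : ∀ x : EuclideanSpace ℝ (Fin d), ψ x ≠ 0 → ∀ i, |x i| < 1 / (8 * d))
    (hφc : HasCompactSupport φ) (hψc : HasCompactSupport ψ)
    (hconv : ∀ x, η x = ∫ t, φ t * ψ (x - t))
    (hη01 : ∀ x, 0 ≤ η x ∧ η x ≤ 1) (hηsm : ContDiff ℝ (⊤ : ℕ∞) η)
    (hη1 : ∀ x : EuclideanSpace ℝ (Fin d), ‖x‖ ≤ 1 / (16 * d) → η x = 1)
    (hη0 : ∀ x : EuclideanSpace ℝ (Fin d), 1 / (8 * d) ≤ ‖x‖ → η x = 0)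
    (p : ℝ) (hp : 1 ≤ p) (Q : ℕ) (hQ : 1 ≤ Q)
    (h : ℝ) (hQh : 2 * (Q : ℝ) ^ (d + 1) ≤ h) (R : Fin d → ℝ) (hR : ∀ i, h ≤ R i)
    (m : Fin d → ℤ) (hm : ∀ i, 1 ≤ m i ∧ m i ≤ (Q : ℤ))
    (f : (Fin d → ℤ) → ℂ) (hf : (Function.support f).Finite) :
    (1 / 2 : ℝ≥0∞) * (Q : ℝ≥0∞) ^ (-(d : ℝ) / p) *
        (∑' x : Fin d → ℤ, (‖bandPiece d η R f x‖₊ : ℝ≥0∞) ^ p) ^ (1 / p)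
      ≤ (∑' x : Fin d → ℤ,
          (‖bandPiece d η R f (fun i => (Q : ℤ) * x i + m i)‖₊ : ℝ≥0∞) ^ p) ^ (1 / p) ∧
    (∑' x : Fin d → ℤ,
        (‖bandPiece d η R f (fun i => (Q : ℤ) * x i + m i)‖₊ : ℝ≥0∞) ^ p) ^ (1 / p)
      ≤ 2 * (Q : ℝ≥0∞) ^ (-(d : ℝ) / p) *
        (∑' x : Fin d → ℤ, (‖bandPiece d η R f x‖₊ : ℝ≥0∞) ^ p) ^ (1 / p) := by
  rcases Nat.eq_zero_or_pos d with hd | hd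
  · subst hd
    have e : ∀ x : Fin 0 → ℤ, (fun i => (Q : ℤ) * x i + m i) = x := fun x => Subsingleton.elim _ _
    simp only [e]
    simp only [Nat.cast_zero, neg_zero, zero_div, ENNReal.rpow_zero, mul_one]
    constructor
    · exact mul_le_of_le_one_left (by simp) (by simp)
    · exact le_mul_of_one_le_left (by simp) (by norm_num)
  have hQr : (1 : ℝ) ≤ Q := by exact_mod_cast hQ
  have hdr : (0 : ℝ) < d := by exact_mod_cast hd
  set C : Set (EuclideanSpace ℝ (Fin d)) := {ξ | ∀ i, ξ i ∈ Set.Ico (0 : ℝ) 1} with hC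
  set τ : ℝ := 1 / (16 * d * (Q : ℝ) ^ (d + 1)) with hτ
  have hτ0 : 0 ≤ τ := by positivity
  set Ξ : EuclideanSpace ℝ (Fin d) → Fin d → ℝ := fun ξ i => max 0 (min τ (ξ i)) with hΞd
  set F : EuclideanSpace ℝ (Fin d) → ℂ := fun ξ =>
    ((η (WithLp.toLp 2 fun i => R i * ξ i) : ℝ) : ℂ) * discFourier d f ξ with hFd
  have hCm : MeasurableSet C := by
    have : C = ⋂ i, (fun ξ : EuclideanSpace ℝ (Fin d) => ξ i) ⁻¹' Set.Ico (0 : ℝ) 1 := by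
      ext ξ; simp [hC]
    rw [this]
    refine MeasurableSet.iInter fun i => ?_
    exact (by fun_prop : Measurable fun ξ : EuclideanSpace ℝ (Fin d) => ξ i) measurableSet_Ico
  have hΞ : Measurable Ξ := by
    refine measurable_pi_lambda _ fun i => ?_
    simp only [hΞd]
    fun_prop
  have hFc : Continuous F := by
    have h1 := discFourier_continuous d f hf
    have h2 := hηsm.continuous
    simp only [hFd]
    fun_prop
  have hF : Integrable F (volume.restrict C) := by
    have hK : IsCompact ((WithLp.toLp 2 : (Fin d → ℝ) → EuclideanSpace ℝ (Fin d)) ''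
        (Set.Icc 0 1)) := isCompact_Icc.image (by fun_prop)
    have := hFc.continuousOn.integrableOn_compact (μ := volume) hK
    refine this.mono_set fun ξ hξ => ?_
    exact ⟨WithLp.ofLp ξ, ⟨fun i => (hξ i).1, fun i => (hξ i).2.le⟩, rfl⟩
  have hg : bandPiece d η R f = trf (volume.restrict C) Ξ F := by
    funext x
    unfold bandPiece trf
    refine setIntegral_congr_fun hCm fun ξ hξ => ?_
    simp only [hFd]
    by_cases hz : η (WithLp.toLp 2 fun i => R i * ξ i) = 0
    · simp [hz]
    have hn : ‖(WithLp.toLp 2 fun i => R i * ξ i : EuclideanSpace ℝ (Fin d))‖ < 1 / (8 * d) := by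
      by_contra hcon
      exact hz (hη0 _ (not_lt.1 hcon))
    have hxi : Ξ ξ = fun i => ξ i := by
      funext i
      have h1 : |R i * ξ i| < 1 / (8 * d) :=
        lt_of_le_of_lt (PiLp.norm_apply_le
          (WithLp.toLp 2 fun i => R i * ξ i : EuclideanSpace ℝ (Fin d)) i) hn
      have h2 : 2 * (Q : ℝ) ^ (d + 1) ≤ R i := hQh.trans (hR i)
      have h3 := (hξ i).1
      have h4 : 2 * (Q : ℝ) ^ (d + 1) * ξ i < 1 / (8 * d) :=
        lt_of_le_of_lt (mul_le_mul_of_nonneg_right h2 h3) (lt_of_le_of_lt (le_abs_self _) h1)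
      have h5 : ξ i ≤ τ := by
        rw [hτ, le_div_iff₀ (by positivity)]
        rw [lt_div_iff₀ (by positivity)] at h4
        linarith
      simp only [hΞd]
      rw [min_eq_right h5, max_eq_right h3]
    rw [hxi, mul_assoc]
    congr 1
    unfold chr
    congr 1
    push_cast
    ring
  have hbox : ∀ ω i, 0 ≤ Ξ ω i ∧ Ξ ω i ≤ τ := fun ω i =>
    ⟨le_max_left _ _, max_le hτ0 (min_le_left _ _)⟩
  have key := sampling_core hp hΞ hd Q hQ hbox F hF m hm
  rw [← hg] at key
  obtain ⟨k1, k2⟩ := key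
  have hq0 : (Q : ℝ≥0∞) ≠ 0 := by exact_mod_cast (by omega : Q ≠ 0)
  have hqt : (Q : ℝ≥0∞) ≠ ⊤ := ENNReal.natCast_ne_top Q
  have hneg : (Q : ℝ≥0∞) ^ (-(d : ℝ) / p) = ((Q : ℝ≥0∞) ^ ((d : ℝ) / p))⁻¹ := by
    rw [neg_div, ENNReal.rpow_neg]
  rw [hneg]
  set q := (Q : ℝ≥0∞) ^ ((d : ℝ) / p) with hq
  have hqq0 : q ≠ 0 := (ENNReal.rpow_pos (pos_iff_ne_zero.2 hq0) hqt).ne'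
  have hqqt : q ≠ ⊤ := ENNReal.rpow_ne_top_of_nonneg (by positivity) hqt
  change 1 / 2 * q⁻¹ * lpN p (bandPiece d η R f) ≤ lpN p (fun x : Fin d → ℤ =>
      bandPiece d η R f (fun i => (Q : ℤ) * x i + m i)) ∧
    lpN p (fun x : Fin d → ℤ => bandPiece d η R f (fun i => (Q : ℤ) * x i + m i)) ≤
      2 * q⁻¹ * lpN p (bandPiece d η R f)
  constructor
  · calc 1 / 2 * q⁻¹ * lpN p (bandPiece d η R f) ≤ 1 / 2 * q⁻¹ * _ := mul_le_mul_right k2 _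
      _ = (2⁻¹ * 2) * (q⁻¹ * q) * lpN p (fun x : Fin d → ℤ =>
          bandPiece d η R f (fun i => (Q : ℤ) * x i + m i)) := by rw [one_div]; ring
      _ ≤ _ := by
        rw [ENNReal.inv_mul_cancel (by simp) (by simp), ENNReal.inv_mul_cancel hqq0 hqqt,
          one_mul, one_mul]
  · calc lpN p (fun x : Fin d → ℤ => bandPiece d η R f (fun i => (Q : ℤ) * x i + m i))
        = q⁻¹ * (q * lpN p (fun x : Fin d → ℤ =>
          bandPiece d η R f (fun i => (Q : ℤ) * x i + m i))) := by
          rw [← mul_assoc, ENNReal.inv_mul_cancel hqq0 hqqt, one_mul]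
      _ ≤ q⁻¹ * (2 * lpN p (bandPiece d η R f)) := by gcongr
      _ = _ := by ring

end
end

section
/- Gaussian-sum approximation for dyadic singular pieces: there is a constant C > 0 (depending only on k and N₀, hence on d) such that for every j ∈ ℕ, every C¹ kernel K_j : ℝ^k → ℂ supported in {y : 2^{j−2} ≤ ‖y‖ ≤ 2^j} with ‖y‖^k |K_j(y)| + ‖y‖^{k+1} ‖∇K_j(y)‖ ≤ 1 for all y, all reals L₁ ≥ 2^j and L₂ ≥ 1, every integer q with 1 ≤ q ≤ L₃ where L₃ ≤ 2^{j/2}, every a ∈ A_q, and every ξ ∈ [0,1)^d satisfying |ξ_γ − a_γ/q| ≤ L₁^{−|γ|} L₂ for all γ ∈ Γ, one has | m_j(ξ) − G(a/q) Φ_j(ξ − a/q) | ≤ C ( L₃ 2^{−j} + L₂ L₃ 2^{−j} Σ_{γ∈Γ} (2^j/L₁)^{|γ|} ) ≤ C' L₂ L₃ 2^{−j}, where m_j(ξ) = Σ_{y∈ℤ^k} e^{2πi ξ·Q(y)} K_j(y) and Φ_j(ξ) = ∫_{ℝ^k} e^{2πi ξ·Q(y)} K_j(y) dy. -/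
noncomputable section

/-- The set `Γ` of multi-indices `γ ≠ 0` with `0 ≤ γ_j ≤ N₀`. -/
abbrev Gam (k N₀ : ℕ) := {γ : Fin k → Fin (N₀ + 1) // γ ≠ 0}

/-- The multiplier `m_j(ξ) = Σ_{y ∈ ℤ^k} e^{2πi ξ·Q(y)} K_j(y)` of a dyadic singular piece
along the canonical polynomial mapping `Q`. -/
def mSing (k N₀ : ℕ) (K : EuclideanSpace ℝ (Fin k) → ℂ) (ξ : Gam k N₀ → ℝ) : ℂ :=
  ∑' y : Fin k → ℤ,
    Complex.exp (2 * Real.pi * Complex.I *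
        ((∑ γ : Gam k N₀, ξ γ * ∏ i, (y i : ℝ) ^ ((γ : Fin k → Fin (N₀ + 1)) i : ℕ) : ℝ) : ℂ)) *
      K (WithLp.toLp 2 (fun i => (y i : ℝ)))

/-- The continuous analogue `Φ_j(θ) = ∫_{ℝ^k} e^{2πi θ·Q(y)} K_j(y) dy`. -/
def PhiSing (k N₀ : ℕ) (K : EuclideanSpace ℝ (Fin k) → ℂ) (θ : Gam k N₀ → ℝ) : ℂ :=
  ∫ y : EuclideanSpace ℝ (Fin k),
    Complex.exp (2 * Real.pi * Complex.I *
        ((∑ γ : Gam k N₀, θ γ * ∏ i, (y i) ^ ((γ : Fin k → Fin (N₀ + 1)) i : ℕ) : ℝ) : ℂ)) *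
      K y

/-- The Gaussian sum `G(a/q) = q^{−k} Σ_{r ∈ {1,…,q}^k} e^{2πi (a/q)·Q(r)}`. -/
def gaussSumCan (k N₀ q : ℕ) (a : Gam k N₀ → ℕ) : ℂ :=
  ((q : ℂ) ^ k)⁻¹ *
    ∑ r ∈ Fintype.piFinset fun _ : Fin k => Finset.Icc 1 q,
      Complex.exp (2 * Real.pi * Complex.I *
        ((∑ γ : Gam k N₀, ((a γ : ℝ) / q) *
            ∏ i, (r i : ℝ) ^ ((γ : Fin k → Fin (N₀ + 1)) i : ℕ) : ℝ) : ℂ))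

/-- Unit cells of the integer lattice. -/
def cellZ (k : ℕ) (z : Fin k → ℤ) : Set (EuclideanSpace ℝ (Fin k)) := {x | ∀ i, ⌊x i⌋ = z i}

lemma cellZ_eq (k : ℕ) (z : Fin k → ℤ) : cellZ k z =
    WithLp.ofLp ⁻¹' (Set.univ.pi fun i => Set.Ico (z i : ℝ) (z i + 1)) := by
  ext x
  simp [cellZ, Int.floor_eq_iff]

lemma measurableSet_cellZ (k : ℕ) (z : Fin k → ℤ) : MeasurableSet (cellZ k z) := by
  rw [cellZ_eq]
  exact (PiLp.volume_preserving_ofLp (Fin k)).measurable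
    (MeasurableSet.univ_pi fun i => measurableSet_Ico)

lemma volume_cellZ (k : ℕ) (z : Fin k → ℤ) : MeasureTheory.volume (cellZ k z) = 1 := by
  rw [cellZ_eq, (PiLp.volume_preserving_ofLp (Fin k)).measure_preimage
    (MeasurableSet.univ_pi fun i => measurableSet_Ico).nullMeasurableSet,
    MeasureTheory.volume_pi_pi]
  simp

open MeasureTheory in
lemma integral_cells (k : ℕ) (F : EuclideanSpace ℝ (Fin k) → ℂ) (hF : Integrable F) :
    HasSum (fun z : Fin k → ℤ => ∫ x in cellZ k z, F x) (∫ x, F x) := by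
  have h := hasSum_integral_iUnion (f := F) (μ := volume) (s := cellZ k)
    (measurableSet_cellZ k) ?_ hF.integrableOn
  · have hU : (⋃ z, cellZ k z) = Set.univ := by
      ext x
      simp only [Set.mem_iUnion, Set.mem_univ, iff_true]
      exact ⟨fun i => ⌊x i⌋, fun i => rfl⟩
    rw [hU, setIntegral_univ] at h
    exact h
  · intro z w hzw
    rw [Function.onFun, Set.disjoint_left]
    intro x hx hy
    apply hzw
    funext i
    rw [← hx i, hy i]

lemma sum_residues (k q : ℕ) [NeZero q] (h : (Fin k → ZMod q) → ℂ) :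
    ∑ r ∈ Fintype.piFinset fun _ : Fin k => Finset.Icc 1 q, h (fun i => (r i : ZMod q))
      = ∑ x, h x := by
  refine Finset.sum_nbij (fun r i => (r i : ZMod q)) (by simp) ?_ ?_ (by simp)
  · intro r hr s hs hrs
    simp only [Finset.mem_coe, Fintype.mem_piFinset, Finset.mem_Icc] at hr hs
    funext i
    have h1 := congrFun hrs i
    simp only at h1
    rw [ZMod.natCast_eq_natCast_iff] at h1
    have hr := hr i
    have hs := hs i
    generalize r i = a at *
    generalize s i = b at *
    rcases le_total a b with hab | hab
    · have := (Nat.modEq_iff_dvd' hab).1 h1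
      by_contra hne
      have := Nat.le_of_dvd (by omega) this
      omega
    · have := (Nat.modEq_iff_dvd' hab).1 h1.symm
      by_contra hne
      have := Nat.le_of_dvd (by omega) this
      omega
  · intro x _
    have hq : 0 < q := Nat.pos_of_ne_zero (NeZero.ne q)
    refine ⟨fun i => if (x i).val = 0 then q else (x i).val, ?_, ?_⟩
    · simp only [Finset.mem_coe, Fintype.mem_piFinset, Finset.mem_Icc]
      intro i
      have := ZMod.val_lt (x i)
      split_ifs <;> omega
    · funext i
      simp only
      split_ifs with h0
      · rw [ZMod.natCast_self]
        exact ((ZMod.val_eq_zero _).1 h0).symm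
      · simp

lemma norm_le_of_coord (k : ℕ) (x : EuclideanSpace ℝ (Fin k)) (B : ℝ) (hk : 1 ≤ k) (hB : 0 ≤ B)
    (h : ∀ i, |x i| ≤ B) : ‖x‖ ≤ k * B := by
  rw [EuclideanSpace.norm_eq]
  apply Real.sqrt_le_iff.2
  refine ⟨by positivity, ?_⟩
  calc ∑ i, ‖x i‖ ^ 2 ≤ ∑ i : Fin k, B ^ 2 := by
        apply Finset.sum_le_sum
        intro i _
        rw [Real.norm_eq_abs]
        exact pow_le_pow_left₀ (abs_nonneg _) (h i) 2
    _ = k * B ^ 2 := by simp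
    _ ≤ (k * B) ^ 2 := by
        rw [mul_pow]
        have : (1 : ℝ) ≤ k := by exact_mod_cast hk
        gcongr
        nlinarith

open MeasureTheory in
lemma core_approx (k q R : ℕ) [NeZero q] (hk : 1 ≤ k) (hR : 1 ≤ R) (hqR : q ≤ R)
    (F : EuclideanSpace ℝ (Fin k) → ℂ) (D : ℝ) (hD : 0 ≤ D) (hFc : Continuous F)
    (hL : ∀ x y, ‖F x - F y‖ ≤ D * ‖x - y‖) (hsupp : ∀ y, F y ≠ 0 → ‖y‖ ≤ R)
    (h : (Fin k → ZMod q) → ℂ) (hh : ∀ x, ‖h x‖ ≤ 1) :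
    ‖∑' y : Fin k → ℤ, h (fun i => (y i : ZMod q)) * F (WithLp.toLp 2 (fun i => (y i : ℝ))) -
      ((q : ℂ) ^ k)⁻¹ * (∑ x, h x) * ∫ x, F x‖ ≤ (7 * R) ^ k * (D * (k * (q + 1))) := by
  have hFi : Integrable F := by
    apply hFc.integrable_of_hasCompactSupport
    apply HasCompactSupport.of_support_subset_isCompact (isCompact_closedBall 0 (R : ℝ))
    intro y hy
    simpa using hsupp y hy
  set I : (Fin k → ℤ) → ℂ := fun z => ∫ x in cellZ k z, F x with hI
  have hIs : HasSum I (∫ x, F x) := integral_cells k F hFi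
  have hF0 : ∀ (x : EuclideanSpace ℝ (Fin k)) (i : Fin k), (R : ℝ) < |x i| → F x = 0 := by
    intro x i hx
    by_contra hne
    have h1 := hsupp x hne
    have h2 := PiLp.norm_apply_le x i
    rw [Real.norm_eq_abs] at h2
    linarith
  have hI0 : ∀ (z : Fin k → ℤ) (i : Fin k), (R : ℤ) + 1 < |z i| → I z = 0 := by
    intro z i hz
    apply setIntegral_eq_zero_of_forall_eq_zero
    intro x hx
    apply hF0 x i
    have h1 := hx i
    rw [Int.floor_eq_iff] at h1
    have hz' : (R : ℝ) + 1 < |(z i : ℝ)| := by exact_mod_cast hz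
    rcases lt_abs.1 hz' with h2 | h2
    · exact lt_abs.2 (Or.inl (by linarith))
    · exact lt_abs.2 (Or.inr (by linarith))
  set B : Finset (Fin k → ℤ) := Fintype.piFinset fun _ => Finset.Icc (-(3 * R : ℤ)) (3 * R) with hB
  have hBc : (B.card : ℝ) ≤ (7 * R) ^ k := by
    have : B.card ≤ (7 * R) ^ k := by
      rw [hB, Fintype.card_piFinset]
      simp only [Int.card_Icc, Finset.prod_const, Finset.card_univ, Fintype.card_fin]
      apply Nat.pow_le_pow_left
      omega
    exact_mod_cast this
  have hnB : ∀ y ∉ B, ∃ i, (3 * R : ℤ) < |y i| := by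
    intro y hy
    by_contra hcon
    push Not at hcon
    apply hy
    rw [hB, Fintype.mem_piFinset]
    intro i
    rw [Finset.mem_Icc]
    exact abs_le.1 (hcon i)
  set S : Finset (Fin k → ℕ) := Fintype.piFinset fun _ => Finset.Icc 1 q with hS
  have hScard : (S.card : ℂ) = (q : ℂ) ^ k := by
    rw [hS, Fintype.card_piFinset]
    simp
  have hq0 : (q : ℂ) ^ k ≠ 0 := pow_ne_zero _ (by exact_mod_cast NeZero.ne q)
  set c : (Fin k → ℤ) → (Fin k → ZMod q) := fun y i => (y i : ZMod q) with hc
  set f : (Fin k → ℤ) → ℂ := fun y => F (WithLp.toLp 2 (fun i => (y i : ℝ))) with hf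
  have hf0 : ∀ y ∉ B, f y = 0 := by
    intro y hy
    obtain ⟨i, hi⟩ := hnB y hy
    apply hF0 _ i
    have h3 : (R : ℤ) < |y i| := by omega
    have h4 : (R : ℝ) < |(y i : ℝ)| := by exact_mod_cast h3
    exact h4
  have hIy0 : ∀ s ∈ S, ∀ y ∉ B, I (fun i => y i + s i) = 0 := by
    intro s hs y hy
    obtain ⟨i, hi⟩ := hnB y hy
    apply hI0 _ i
    rw [hS, Fintype.mem_piFinset] at hs
    have := Finset.mem_Icc.1 (hs i)
    rcases lt_abs.1 hi with h2 | h2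
    · exact lt_abs.2 (Or.inl (by omega))
    · exact lt_abs.2 (Or.inr (by omega))
  have hsum1 : Summable (fun y => h (c y) * f y) :=
    summable_of_ne_finset_zero (s := B) fun y hy => by rw [hf0 y hy, mul_zero]
  have hsum2 : ∀ s ∈ S, Summable (fun y => h (c y) * I (fun i => y i + s i)) := fun s hs =>
    summable_of_ne_finset_zero (s := B) fun y hy => by rw [hIy0 s hs y hy, mul_zero]
  have key : ∀ s ∈ S, ∀ y, ‖f y - I (fun i => y i + s i)‖ ≤ D * (k * (q + 1)) := by
    intro s hs y
    have hv := volume_cellZ k (fun i => y i + s i)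
    have e : f y = ∫ x in cellZ k (fun i => y i + s i), f y := by
      rw [setIntegral_const, Measure.real, hv]
      simp
    have e2 : f y - I (fun i => y i + s i) = ∫ x in cellZ k (fun i => y i + s i), (f y - F x) := by
      rw [integral_sub _ hFi.integrableOn, ← e]
      rw [integrable_const_iff]
      right
      rw [isFiniteMeasure_restrict, hv]
      simp
    rw [e2]
    have := norm_setIntegral_le_of_norm_le_const (μ := volume) (f := fun x => f y - F x)
      (s := cellZ k (fun i => y i + s i)) (C := D * (k * (q + 1))) (by rw [hv]; simp) ?_
    · simpa [Measure.real, hv] using this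
    · intro x hx
      refine (hL _ _).trans ?_
      gcongr
      apply norm_le_of_coord k _ _ hk (by positivity)
      intro i
      have h1 := hx i
      rw [Int.floor_eq_iff] at h1
      rw [hS, Fintype.mem_piFinset] at hs
      have h2 := Finset.mem_Icc.1 (hs i)
      have h3 : (s i : ℝ) ≤ q := by exact_mod_cast h2.2
      have h4 : (0 : ℝ) ≤ s i := by positivity
      push_cast at h1
      simp only [PiLp.sub_apply]
      rw [abs_le]
      constructor <;> linarith
  have hH : ∀ z : Fin k → ℤ, ∑ s ∈ S, h (fun i => (z i : ZMod q) - (s i : ZMod q)) = ∑ x, h x := by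
    intro z
    rw [hS, sum_residues k q (fun x => h (fun i => (z i : ZMod q) - x i))]
    exact Fintype.sum_equiv (Equiv.subLeft (c z)) _ _ (fun x => rfl)
  have hshift : ∀ s ∈ S, ∑' y, h (c y) * I (fun i => y i + s i) =
      ∑' z, h (fun i => (z i : ZMod q) - (s i : ZMod q)) * I z ∧
      Summable (fun z : Fin k → ℤ => h (fun i => (z i : ZMod q) - (s i : ZMod q)) * I z) := by
    intro s hs
    have e : (fun y => h (c y) * I (fun i => y i + s i)) =
        (fun z : Fin k → ℤ => h (fun i => (z i : ZMod q) - (s i : ZMod q)) * I z) ∘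
        (Equiv.addRight (fun i => (s i : ℤ))) := by
      funext y
      simp only [Function.comp, Equiv.coe_addRight, hc]
      congr 2
      funext i
      simp
    constructor
    · rw [e]
      exact Equiv.tsum_eq (Equiv.addRight (fun i => (s i : ℤ)))
        (fun z : Fin k → ℤ => h (fun i => (z i : ZMod q) - (s i : ZMod q)) * I z)
    · have := hsum2 s hs
      rw [e, Equiv.summable_iff] at this
      exact this
  have hmain : ∑ s ∈ S, ∑' y, h (c y) * I (fun i => y i + s i) = (∑ x, h x) * ∫ x, F x := by
    rw [Finset.sum_congr rfl fun s hs => (hshift s hs).1,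
      ← Summable.tsum_finsetSum fun s hs => (hshift s hs).2, ← hIs.tsum_eq, ← tsum_mul_left]
    congr 1
    funext z
    rw [← Finset.sum_mul, hH]
  have hT : ∀ s ∈ S, ‖∑' y, h (c y) * f y - ∑' y, h (c y) * I (fun i => y i + s i)‖ ≤
      (7 * R) ^ k * (D * (k * (q + 1))) := by
    intro s hs
    rw [← hsum1.tsum_sub (hsum2 s hs), tsum_eq_sum (s := B)]
    · refine (norm_sum_le _ _).trans ?_
      refine (Finset.sum_le_card_nsmul B _ (D * (k * (q + 1))) ?_).trans ?_
      · intro y _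
        rw [← mul_sub, norm_mul]
        calc _ ≤ 1 * (D * (k * (q + 1))) := by
              gcongr
              · exact hh _
              · exact key s hs y
          _ = _ := one_mul _
      · rw [nsmul_eq_mul]
        gcongr
    · intro y hy
      rw [hf0 y hy, hIy0 s hs y hy]
      simp
  have hfin : ∑' y, h (c y) * f y - ((q : ℂ) ^ k)⁻¹ * (∑ x, h x) * ∫ x, F x =
      ((q : ℂ) ^ k)⁻¹ * ∑ s ∈ S, (∑' y, h (c y) * f y - ∑' y, h (c y) * I (fun i => y i + s i)) := by
    rw [Finset.sum_sub_distrib, hmain, Finset.sum_const, nsmul_eq_mul, hScard, mul_sub,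
      inv_mul_cancel_left₀ hq0, mul_assoc]
  rw [hfin, norm_mul]
  have : ‖∑ s ∈ S, (∑' y, h (c y) * f y - ∑' y, h (c y) * I (fun i => y i + s i))‖ ≤
      (q : ℝ) ^ k * ((7 * R) ^ k * (D * (k * (q + 1)))) := by
    refine (norm_sum_le _ _).trans ?_
    refine (Finset.sum_le_card_nsmul S _ _ hT).trans ?_
    rw [nsmul_eq_mul]
    have : (S.card : ℝ) = (q : ℝ) ^ k := by exact_mod_cast hScard
    rw [this]
  have hq0' : (q : ℝ) ^ k ≠ 0 := pow_ne_zero _ (by exact_mod_cast NeZero.ne q)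
  calc _ ≤ ((q : ℝ) ^ k)⁻¹ * ((q : ℝ) ^ k * ((7 * R) ^ k * (D * (k * (q + 1))))) := by
        rw [norm_inv, norm_pow, Complex.norm_natCast]
        gcongr
    _ = _ := by rw [inv_mul_cancel_left₀ hq0']

lemma mono_deriv (k : ℕ) (e : Fin k → ℕ) (y : EuclideanSpace ℝ (Fin k)) (R : ℝ) (hR : 0 ≤ R)
    (hy : ‖y‖ ≤ R) (s : Finset (Fin k)) :
    ∃ f' : EuclideanSpace ℝ (Fin k) →L[ℝ] ℝ,
      HasFDerivAt (fun x : EuclideanSpace ℝ (Fin k) => ∏ i ∈ s, x i ^ e i) f' y ∧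
      R * ‖f'‖ ≤ (∑ i ∈ s, e i : ℕ) * R ^ (∑ i ∈ s, e i) := by
  have hyi : ∀ i, |y i| ≤ R := fun i => by
    have := PiLp.norm_apply_le y i
    rw [Real.norm_eq_abs] at this
    linarith
  induction s using Finset.induction_on with
  | empty => exact ⟨0, by simpa using hasFDerivAt_const (1 : ℝ) y, by simp⟩
  | insert i s his ih =>
    obtain ⟨f', hf', hb⟩ := ih
    set p : EuclideanSpace ℝ (Fin k) →L[ℝ] ℝ := EuclideanSpace.proj i with hp
    have hpn : ‖p‖ ≤ 1 := by
      apply ContinuousLinearMap.opNorm_le_bound _ zero_le_one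
      intro x
      rw [one_mul]
      exact PiLp.norm_apply_le x i
    have h1 : HasFDerivAt (fun x : EuclideanSpace ℝ (Fin k) => x i ^ e i)
        ((e i * y i ^ (e i - 1) : ℝ) • p) y := by
      have := (p.hasFDerivAt (x := y)).pow (e i)
      rw [nsmul_eq_mul] at this
      exact this
    have h2 := h1.mul hf'
    refine ⟨y i ^ e i • f' + (∏ j ∈ s, y j ^ e j) • ((e i * y i ^ (e i - 1) : ℝ) • p), ?_, ?_⟩
    · simp only [Finset.prod_insert his]
      exact h2
    · rw [Finset.sum_insert his]
      have hA : R * ‖(e i * y i ^ (e i - 1) : ℝ) • p‖ ≤ e i * R ^ e i := by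
        rw [norm_smul, norm_mul, norm_pow, Real.norm_natCast, Real.norm_eq_abs]
        rcases Nat.eq_zero_or_pos (e i) with h0 | h0
        · simp [h0]
        · calc R * (e i * |y i| ^ (e i - 1) * ‖p‖) ≤ R * (e i * R ^ (e i - 1) * 1) := by
                gcongr
                exact hyi i
            _ = e i * R ^ (e i - 1 + 1) := by ring
            _ = _ := by rw [Nat.sub_add_cancel h0]
      have hB : |∏ j ∈ s, y j ^ e j| ≤ R ^ (∑ j ∈ s, e j) := by
        rw [Finset.abs_prod, ← Finset.prod_pow_eq_pow_sum]
        apply Finset.prod_le_prod (fun _ _ => abs_nonneg _)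
        intro j _
        rw [abs_pow]
        exact pow_le_pow_left₀ (abs_nonneg _) (hyi j) _
      have hC : |y i ^ e i| ≤ R ^ e i := by
        rw [abs_pow]
        exact pow_le_pow_left₀ (abs_nonneg _) (hyi i) _
      refine (mul_le_mul_of_nonneg_left (norm_add_le _ _) hR).trans ?_
      rw [norm_smul _ f', norm_smul (∏ j ∈ s, y j ^ e j), Real.norm_eq_abs, Real.norm_eq_abs]
      calc R * (|y i ^ e i| * ‖f'‖ + |∏ j ∈ s, y j ^ e j| * ‖(e i * y i ^ (e i - 1) : ℝ) • p‖)
          = |y i ^ e i| * (R * ‖f'‖) +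
            |∏ j ∈ s, y j ^ e j| * (R * ‖(e i * y i ^ (e i - 1) : ℝ) • p‖) := by ring
        _ ≤ R ^ e i * ((∑ i ∈ s, e i : ℕ) * R ^ (∑ i ∈ s, e i)) +
            R ^ (∑ j ∈ s, e j) * (e i * R ^ e i) := by gcongr
        _ = _ := by push_cast; rw [pow_add]; ring

lemma phase_deriv (k N₀ : ℕ) (θ : Gam k N₀ → ℝ) (y : EuclideanSpace ℝ (Fin k)) (R : ℝ)
    (hR : 0 ≤ R) (hy : ‖y‖ ≤ R) :
    ∃ f' : EuclideanSpace ℝ (Fin k) →L[ℝ] ℝ,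
      HasFDerivAt (fun x : EuclideanSpace ℝ (Fin k) => ∑ γ : Gam k N₀, θ γ *
        ∏ i, (x i) ^ ((γ : Fin k → Fin (N₀ + 1)) i : ℕ)) f' y ∧
      R * ‖f'‖ ≤ ∑ γ : Gam k N₀, |θ γ| * ((k * N₀) *
        R ^ (∑ i, ((γ : Fin k → Fin (N₀ + 1)) i : ℕ))) := by
  choose g hg hb using fun γ : Gam k N₀ =>
    mono_deriv k (fun i => ((γ : Fin k → Fin (N₀ + 1)) i : ℕ)) y R hR hy Finset.univ
  refine ⟨∑ γ, θ γ • g γ, ?_, ?_⟩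
  · apply HasFDerivAt.fun_sum
    intro γ _
    exact (hg γ).const_mul (θ γ)
  · calc R * ‖∑ γ, θ γ • g γ‖ ≤ R * ∑ γ, ‖θ γ • g γ‖ := by
          gcongr
          exact norm_sum_le _ _
      _ = ∑ γ, |θ γ| * (R * ‖g γ‖) := by
          rw [Finset.mul_sum]
          apply Finset.sum_congr rfl
          intro γ _
          rw [norm_smul, Real.norm_eq_abs]
          ring
      _ ≤ _ := by
          apply Finset.sum_le_sum
          intro γ _
          refine mul_le_mul_of_nonneg_left ((hb γ).trans ?_) (abs_nonneg _)
          refine mul_le_mul_of_nonneg_right ?_ (by positivity)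
          have : ∑ i, ((γ : Fin k → Fin (N₀ + 1)) i : ℕ) ≤ ∑ i : Fin k, N₀ :=
            Finset.sum_le_sum fun i _ => Nat.lt_succ_iff.1 (Fin.is_lt _)
          simp only [Finset.sum_const, Finset.card_univ, Fintype.card_fin, smul_eq_mul] at this
          exact_mod_cast this

lemma norm_exp_phase (t : ℝ) : ‖Complex.exp (2 * Real.pi * Complex.I * (t : ℂ))‖ = 1 := by
  have : (2 * Real.pi * Complex.I * (t : ℂ)) = ((2 * Real.pi * t : ℝ) : ℂ) * Complex.I := by
    push_cast; ring
  rw [this, Complex.norm_exp_ofReal_mul_I]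

lemma F_deriv (k N₀ : ℕ) (θ : Gam k N₀ → ℝ) (R M : ℝ) (hR : 0 < R)
    (hM : ∑ γ : Gam k N₀, |θ γ| * R ^ (∑ i, ((γ : Fin k → Fin (N₀ + 1)) i : ℕ)) ≤ M)
    (K : EuclideanSpace ℝ (Fin k) → ℂ) (hK : ContDiff ℝ 1 K)
    (hs : ∀ y : EuclideanSpace ℝ (Fin k), K y ≠ 0 → R / 4 ≤ ‖y‖ ∧ ‖y‖ ≤ R)
    (hb : ∀ y : EuclideanSpace ℝ (Fin k),
          ‖y‖ ^ k * ‖K y‖ + ‖y‖ ^ (k + 1) * ‖fderiv ℝ K y‖ ≤ 1)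
    (y : EuclideanSpace ℝ (Fin k)) :
    ∃ F' : EuclideanSpace ℝ (Fin k) →L[ℝ] ℂ, HasFDerivAt (fun y : EuclideanSpace ℝ (Fin k) =>
      Complex.exp (2 * Real.pi * Complex.I *
        ((∑ γ : Gam k N₀, θ γ * ∏ i, (y i) ^ ((γ : Fin k → Fin (N₀ + 1)) i : ℕ) : ℝ) : ℂ)) *
      K y) F' y ∧ ‖F'‖ ≤ (4 / R) ^ (k + 1) * (1 + 2 * Real.pi * (k * N₀) * M) := by
  have hM0 : 0 ≤ M := le_trans (by positivity) hM
  obtain ⟨P', hP', -⟩ := phase_deriv k N₀ θ y ‖y‖ (norm_nonneg _) le_rfl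
  have hKd : HasFDerivAt K (fderiv ℝ K y) y := (hK.differentiable (by norm_num) y).hasFDerivAt
  have h1 : HasFDerivAt (fun x : EuclideanSpace ℝ (Fin k) => ((∑ γ : Gam k N₀, θ γ *
        ∏ i, (x i) ^ ((γ : Fin k → Fin (N₀ + 1)) i : ℕ) : ℝ) : ℂ)) (Complex.ofRealCLM.comp P') y :=
    Complex.ofRealCLM.hasFDerivAt.comp y hP'
  have h2 := (h1.const_mul (2 * Real.pi * Complex.I)).cexp.mul hKd
  refine ⟨_, h2, ?_⟩
  have hKn : ‖fderiv ℝ K y‖ ≤ (4 / R) ^ (k + 1) := by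
    by_cases hy : ‖y‖ < R / 4
    · have : K =ᶠ[nhds y] fun _ => 0 := by
        filter_upwards [(isOpen_lt continuous_norm continuous_const).mem_nhds hy] with x hx
        by_contra hne
        have := (hs x hne).1
        have hx' : ‖x‖ < R / 4 := hx
        linarith
      rw [this.fderiv_eq]
      simp
      positivity
    · push Not at hy
      have h3 := hb y
      have h4 : 0 ≤ ‖y‖ ^ k * ‖K y‖ := by positivity
      have h5 : (R / 4) ^ (k + 1) * ‖fderiv ℝ K y‖ ≤ 1 := by
        calc _ ≤ ‖y‖ ^ (k + 1) * ‖fderiv ℝ K y‖ := by gcongr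
          _ ≤ 1 := by linarith
      have h6 : (4 / R) ^ (k + 1) = ((R / 4) ^ (k + 1))⁻¹ := by rw [← inv_pow, inv_div]
      rw [h6, ← one_div, le_div_iff₀ (by positivity), mul_comm]
      exact h5
  refine (norm_add_le _ _).trans ?_
  rw [norm_smul, norm_smul, norm_exp_phase, one_mul, mul_add, mul_one]
  apply add_le_add hKn
  rw [norm_smul, norm_exp_phase, one_mul, norm_smul]
  by_cases hy : K y = 0
  · rw [hy]
    simp only [norm_zero, zero_mul]
    positivity
  · obtain ⟨hy1, hy2⟩ := hs y hy
    obtain ⟨P2, hP2, hPb⟩ := phase_deriv k N₀ θ y R hR.le hy2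
    have := hP2.unique hP'
    subst this
    have hKy : ‖K y‖ ≤ (4 / R) ^ k := by
      have h3 := hb y
      have h4 : 0 ≤ ‖y‖ ^ (k + 1) * ‖fderiv ℝ K y‖ := by positivity
      have h5 : (R / 4) ^ k * ‖K y‖ ≤ 1 := by
        calc _ ≤ ‖y‖ ^ k * ‖K y‖ := by gcongr
          _ ≤ 1 := by linarith
      have h6 : (4 / R) ^ k = ((R / 4) ^ k)⁻¹ := by rw [← inv_pow, inv_div]
      rw [h6, ← one_div, le_div_iff₀ (by positivity), mul_comm]
      exact h5
    have hP3 : ‖P2‖ ≤ (k * N₀) * M / R := by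
      rw [le_div_iff₀ hR, mul_comm]
      refine hPb.trans ?_
      calc _ = (k * N₀) *
            ∑ γ : Gam k N₀, |θ γ| * R ^ (∑ i, ((γ : Fin k → Fin (N₀ + 1)) i : ℕ)) := by
            rw [Finset.mul_sum]
            exact Finset.sum_congr rfl fun _ _ => by ring
        _ ≤ _ := by gcongr
    have hn : ‖(2 * Real.pi * Complex.I : ℂ)‖ = 2 * Real.pi := by
      simp [abs_of_pos Real.pi_pos]
    have hc : ‖Complex.ofRealCLM.comp P2‖ ≤ ‖P2‖ := by
      refine (ContinuousLinearMap.opNorm_comp_le _ _).trans ?_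
      simp
    rw [hn]
    calc _ ≤ (4 / R) ^ k * (2 * Real.pi * ((k * N₀) * M / R)) := by
          gcongr
          exact hc.trans hP3
      _ = (4 / R) ^ k * (1 / R) * (2 * Real.pi * (k * N₀) * M) := by ring
      _ ≤ (4 / R) ^ k * (4 / R) * (2 * Real.pi * (k * N₀) * M) := by
          gcongr
          norm_num
      _ = _ := by ring

lemma phase_split (k N₀ q : ℕ) [NeZero q] (a : Gam k N₀ → ℕ) (y : Fin k → ℤ) :
    Complex.exp (2 * Real.pi * Complex.I *
        ((∑ γ : Gam k N₀, ((a γ : ℝ) / q) *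
            ∏ i, (y i : ℝ) ^ ((γ : Fin k → Fin (N₀ + 1)) i : ℕ) : ℝ) : ℂ)) =
    ZMod.stdAddChar (∑ γ : Gam k N₀, (a γ : ZMod q) *
      ∏ i, (y i : ZMod q) ^ ((γ : Fin k → Fin (N₀ + 1)) i : ℕ)) := by
  have h := ZMod.stdAddChar_coe (N := q) (∑ γ : Gam k N₀, (a γ : ℤ) *
      ∏ i, (y i) ^ ((γ : Fin k → Fin (N₀ + 1)) i : ℕ))
  push_cast at h
  rw [h]
  congr 1
  push_cast
  rw [mul_div_assoc, Finset.sum_div]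
  congr 1
  exact Finset.sum_congr rfl fun _ _ => by ring

set_option maxHeartbeats 1000000 in
/-- **Proposition 7.1 (Gaussian-sum approximation for dyadic singular pieces).** -/
theorem statement17 (k N₀ : ℕ) (hk : 1 ≤ k) (hN₀ : 1 ≤ N₀) :
    ∃ C : ℝ, 0 < C ∧
      ∀ j : ℕ, 1 ≤ j →
      ∀ K : EuclideanSpace ℝ (Fin k) → ℂ, ContDiff ℝ 1 K →
        (∀ y : EuclideanSpace ℝ (Fin k), K y ≠ 0 →
          (2 : ℝ) ^ j / 4 ≤ ‖y‖ ∧ ‖y‖ ≤ (2 : ℝ) ^ j) →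
        (∀ y : EuclideanSpace ℝ (Fin k),
          ‖y‖ ^ k * ‖K y‖ + ‖y‖ ^ (k + 1) * ‖fderiv ℝ K y‖ ≤ 1) →
      ∀ L₁ L₂ L₃ : ℝ, (2 : ℝ) ^ j ≤ L₁ → 1 ≤ L₂ → L₃ ≤ Real.sqrt ((2 : ℝ) ^ j) →
      ∀ q : ℕ, 1 ≤ q → (q : ℝ) ≤ L₃ →
      ∀ a : Gam k N₀ → ℕ, (∀ γ, 1 ≤ a γ ∧ a γ ≤ q) →
        Nat.gcd q (Finset.univ.gcd a) = 1 →
      ∀ ξ : Gam k N₀ → ℝ, (∀ γ, 0 ≤ ξ γ ∧ ξ γ < 1) →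
        (∀ γ : Gam k N₀,
          |ξ γ - (a γ : ℝ) / q| ≤
            L₂ / L₁ ^ (∑ i, ((γ : Fin k → Fin (N₀ + 1)) i : ℕ))) →
        ‖mSing k N₀ K ξ -
            gaussSumCan k N₀ q a * PhiSing k N₀ K (fun γ => ξ γ - (a γ : ℝ) / q)‖
            ≤ C * (L₃ / (2 : ℝ) ^ j + L₂ * L₃ / (2 : ℝ) ^ j *
              ∑ γ : Gam k N₀,
                ((2 : ℝ) ^ j / L₁) ^ (∑ i, ((γ : Fin k → Fin (N₀ + 1)) i : ℕ))) ∧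
        ‖mSing k N₀ K ξ -
            gaussSumCan k N₀ q a * PhiSing k N₀ K (fun γ => ξ γ - (a γ : ℝ) / q)‖
            ≤ C * (L₂ * L₃ / (2 : ℝ) ^ j) := by
  set C₀ : ℝ := 7 ^ k * 4 ^ (k + 1) * (1 + 2 * Real.pi * (k * N₀)) * (k * 2) with hC₀
  have hC₀p : 0 < C₀ := by
    have : (1 : ℝ) ≤ k := by exact_mod_cast hk
    positivity
  refine ⟨C₀ * (1 + Fintype.card (Gam k N₀)), by positivity, ?_⟩
  intro j hj K hK hs hb L₁ L₂ L₃ hL₁ hL₂ hL₃ q hq hqL a ha hgcd ξ hξ hθ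
  have : NeZero q := ⟨by omega⟩
  set R : ℝ := (2 : ℝ) ^ j with hRdef
  have hR1 : 1 ≤ R := one_le_pow₀ (by norm_num)
  have hRp : 0 < R := by linarith
  have hL₁p : 0 < L₁ := by linarith
  have hq1 : (1 : ℝ) ≤ q := by exact_mod_cast hq
  have hqR : (q : ℝ) ≤ R := by
    have h1 : Real.sqrt R ≤ R := by
      rw [Real.sqrt_le_left hRp.le]
      nlinarith
    linarith
  have hqR' : q ≤ 2 ^ j := by
    rw [hRdef] at hqR
    exact_mod_cast hqR
  set θ : Gam k N₀ → ℝ := fun γ => ξ γ - (a γ : ℝ) / q with hθd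
  set S : ℝ := ∑ γ : Gam k N₀, (R / L₁) ^ (∑ i, ((γ : Fin k → Fin (N₀ + 1)) i : ℕ)) with hSd
  have hS0 : 0 ≤ S := by positivity
  have hScard : S ≤ Fintype.card (Gam k N₀) := by
    calc S ≤ ∑ γ : Gam k N₀, (1 : ℝ) := by
          apply Finset.sum_le_sum
          intro γ _
          apply pow_le_one₀ (by positivity)
          rw [div_le_one hL₁p]
          exact hL₁
      _ = _ := by simp
  have hM : ∑ γ : Gam k N₀, |θ γ| * R ^ (∑ i, ((γ : Fin k → Fin (N₀ + 1)) i : ℕ)) ≤ L₂ * S := by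
    rw [hSd, Finset.mul_sum]
    apply Finset.sum_le_sum
    intro γ _
    calc _ ≤ L₂ / L₁ ^ (∑ i, ((γ : Fin k → Fin (N₀ + 1)) i : ℕ)) *
          R ^ (∑ i, ((γ : Fin k → Fin (N₀ + 1)) i : ℕ)) := by
          gcongr
          exact hθ γ
      _ = _ := by rw [div_pow]; ring
  set F : EuclideanSpace ℝ (Fin k) → ℂ := fun y : EuclideanSpace ℝ (Fin k) =>
      Complex.exp (2 * Real.pi * Complex.I *
        ((∑ γ : Gam k N₀, θ γ * ∏ i, (y i) ^ ((γ : Fin k → Fin (N₀ + 1)) i : ℕ) : ℝ) : ℂ)) *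
      K y with hFd
  choose F' hF' hFb using F_deriv k N₀ θ R (L₂ * S) hRp hM K hK hs hb
  set D : ℝ := (4 / R) ^ (k + 1) * (1 + 2 * Real.pi * (k * N₀) * (L₂ * S)) with hDd
  have hD0 : 0 ≤ D := by positivity
  have hdiff : Differentiable ℝ F := fun y => (hF' y).differentiableAt
  have hLip : ∀ x y, ‖F x - F y‖ ≤ D * ‖x - y‖ := fun x y =>
    Convex.norm_image_sub_le_of_norm_fderiv_le (𝕜 := ℝ) (s := Set.univ)
      (fun z _ => hdiff z) (fun z _ => by rw [(hF' z).fderiv]; exact hFb z) convex_univ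
      (Set.mem_univ _) (Set.mem_univ _)
  have hcore := core_approx k q (2 ^ j) hk Nat.one_le_two_pow hqR' F D hD0 hdiff.continuous hLip
    (fun y hy => by
      have : K y ≠ 0 := fun h0 => hy (by simp [hFd, h0])
      have := (hs y this).2
      push_cast
      exact this)
    (fun x => ZMod.stdAddChar (∑ γ : Gam k N₀, (a γ : ZMod q) *
      ∏ i, (x i) ^ ((γ : Fin k → Fin (N₀ + 1)) i : ℕ)))
    (fun x => (AddChar.norm_apply _ _).le)
  have hm : mSing k N₀ K ξ = ∑' y : Fin k → ℤ,
      ZMod.stdAddChar (∑ γ : Gam k N₀, (a γ : ZMod q) *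
        ∏ i, (y i : ZMod q) ^ ((γ : Fin k → Fin (N₀ + 1)) i : ℕ)) *
      F (WithLp.toLp 2 (fun i => (y i : ℝ))) := by
    rw [mSing]
    congr 1
    funext y
    rw [← phase_split, hFd]
    simp only
    rw [← mul_assoc, ← Complex.exp_add, ← mul_add, ← Complex.ofReal_add, ← Finset.sum_add_distrib]
    have hsum : ∑ γ : Gam k N₀, ξ γ * ∏ i, (y i : ℝ) ^ ((γ : Fin k → Fin (N₀ + 1)) i : ℕ) =
        ∑ γ : Gam k N₀, ((a γ : ℝ) / q *
          ∏ i, (y i : ℝ) ^ ((γ : Fin k → Fin (N₀ + 1)) i : ℕ) +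
          θ γ * ∏ i, (y i : ℝ) ^ ((γ : Fin k → Fin (N₀ + 1)) i : ℕ)) := by
      apply Finset.sum_congr rfl
      intro γ _
      rw [hθd]
      ring
    rw [hsum]
  have hG : gaussSumCan k N₀ q a = ((q : ℂ) ^ k)⁻¹ * ∑ x : Fin k → ZMod q,
      ZMod.stdAddChar (∑ γ : Gam k N₀, (a γ : ZMod q) *
        ∏ i, (x i) ^ ((γ : Fin k → Fin (N₀ + 1)) i : ℕ)) := by
    rw [gaussSumCan, ← sum_residues k q]
    congr 1
    apply Finset.sum_congr rfl
    intro r _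
    have := phase_split k N₀ q a (fun i => (r i : ℤ))
    simp only [Int.cast_natCast] at this
    exact this
  have hP : PhiSing k N₀ K θ = ∫ x, F x := rfl
  have hmain : ‖mSing k N₀ K ξ - gaussSumCan k N₀ q a * PhiSing k N₀ K θ‖ ≤
      C₀ * (L₃ / R + L₂ * L₃ / R * S) := by
    rw [hm, hG, hP]
    refine hcore.trans ?_
    have hcast : (((2 ^ j : ℕ)) : ℝ) = R := by push_cast; rfl
    rw [hcast]
    have hE : 1 + 2 * Real.pi * (k * N₀) * (L₂ * S) ≤
        (1 + 2 * Real.pi * (k * N₀)) * (1 + L₂ * S) := by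
      have h1 : 0 ≤ 2 * Real.pi * (k * N₀) := by positivity
      have h2 : 0 ≤ L₂ * S := by positivity
      nlinarith
    calc (7 * R) ^ k * (D * (k * (q + 1)))
        ≤ (7 * R) ^ k * ((4 / R) ^ (k + 1) * ((1 + 2 * Real.pi * (k * N₀)) * (1 + L₂ * S)) *
          (k * (2 * L₃))) := by
          have h1 : (k : ℝ) * (q + 1) ≤ k * (2 * L₃) := by
            apply mul_le_mul_of_nonneg_left _ (by positivity)
            linarith
          have h2 : D ≤ (4 / R) ^ (k + 1) *
              ((1 + 2 * Real.pi * (k * N₀)) * (1 + L₂ * S)) :=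
            mul_le_mul_of_nonneg_left hE (by positivity)
          apply mul_le_mul_of_nonneg_left _ (by positivity)
          exact mul_le_mul h2 h1 (by positivity) (hD0.trans h2)
      _ = C₀ * (L₃ / R + L₂ * L₃ / R * S) := by
          rw [hC₀, mul_pow, div_pow]
          field_simp
          ring
  have hL₃ : 0 ≤ L₃ := by linarith
  have hn : (0 : ℝ) ≤ Fintype.card (Gam k N₀) := Nat.cast_nonneg _
  generalize (Fintype.card (Gam k N₀) : ℝ) = n at hScard hn ⊢
  have hX : 0 ≤ L₃ / R + L₂ * L₃ / R * S := by positivity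
  refine ⟨hmain.trans ?_, hmain.trans ?_⟩
  · rw [mul_assoc C₀ (1 + n)]
    apply mul_le_mul_of_nonneg_left _ hC₀p.le
    nlinarith
  · rw [mul_assoc C₀ (1 + n)]
    apply mul_le_mul_of_nonneg_left _ hC₀p.le
    have h1 : L₃ / R ≤ L₂ * L₃ / R := by
      apply div_le_div_of_nonneg_right _ hRp.le
      nlinarith
    have h2 : L₂ * L₃ / R * S ≤ L₂ * L₃ / R * n :=
      mul_le_mul_of_nonneg_left hScard (by positivity)
    linarith

end
end
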